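/- For every integer n ≥ 1, the theory PA⁻ + IΣn does not prove CARD(Σ_{n+1}); that is, there exists a model M of PA⁻ + IΣn and an element a ∈ M such that there is a Σ_{n+1}-definable injection from the whole of M into [0,a). -/

import Mathlib

/- Shared development: first-order arithmetic in the language {0,1,+,·,<},
   the arithmetic hierarchy, fragments of arithmetic, and coded finite
   combinatorics inside models. -/

open FirstOrder Language

namespace ArithFC

/-- Function symbols of the language of arithmetic: 0, 1, +, ·. -/
inductive Func : ℕ → Type
  | zero : Func 0
  | one : Func 0
  | add : Func 2
  | mul : Func 2

/-- Relation symbols of the language of arithmetic: <. -/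
inductive Rel : ℕ → Type
  | lt : Rel 2

/-- The first-order language {0, 1, +, ·, <}. -/
def lang : Language :=
  { Functions := Func, Relations := Rel }

section Instances

variable (M : Type) [lang.Structure M]

instance : Zero M := ⟨Structure.funMap (L := lang) Func.zero ![]⟩
instance : One M := ⟨Structure.funMap (L := lang) Func.one ![]⟩
instance : Add M := ⟨fun x y => Structure.funMap (L := lang) Func.add ![x, y]⟩
instance : Mul M := ⟨fun x y => Structure.funMap (L := lang) Func.mul ![x, y]⟩
instance : LT M := ⟨fun x y => Structure.RelMap (L := lang) Rel.lt ![x, y]⟩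
instance : LE M := ⟨fun x y => x < y ∨ x = y⟩

end Instances

/-- The numeral `n` in a model. -/
def numM (M : Type) [lang.Structure M] : ℕ → M
  | 0 => 0
  | n + 1 => numM M n + 1

/-- `b` is nonstandard (greater than every numeral). -/
def Nonstd {M : Type} [lang.Structure M] (b : M) : Prop := ∀ n : ℕ, numM M n < b

/-- The atomic formula `t < u`. -/
def ltFm {α : Type} {n : ℕ} (t u : lang.Term (α ⊕ Fin n)) : lang.BoundedFormula α n :=
  BoundedFormula.rel (Rel.lt : lang.Relations 2) ![t, u]

/-- Δ₀ formulas: built from atomic formulas by boolean connectives and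
bounded universal quantification (this generates, up to logical equivalence,
the usual class of bounded formulas). -/
inductive IsDelta0 {α : Type} : ∀ n : ℕ, lang.BoundedFormula α n → Prop
  | falsum (n : ℕ) : IsDelta0 n BoundedFormula.falsum
  | equal (n : ℕ) (t u : lang.Term (α ⊕ Fin n)) : IsDelta0 n (BoundedFormula.equal t u)
  | rel (n l : ℕ) (R : lang.Relations l) (ts : Fin l → lang.Term (α ⊕ Fin n)) :
      IsDelta0 n (BoundedFormula.rel R ts)
  | imp (n : ℕ) {φ ψ : lang.BoundedFormula α n} :
      IsDelta0 n φ → IsDelta0 n ψ → IsDelta0 n (φ.imp ψ)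
  | bdAll (n : ℕ) (t : lang.Term (α ⊕ Fin n)) {φ : lang.BoundedFormula α (n + 1)} :
      IsDelta0 (n + 1) φ →
      IsDelta0 n
        (BoundedFormula.all ((ltFm (Term.var (Sum.inr (Fin.last n))) (t.liftAt 1 n)).imp φ))

mutual
  /-- Σ_m formulas. -/
  inductive SigmaFm {α : Type} : ℕ → ∀ n : ℕ, lang.BoundedFormula α n → Prop
    | delta0 (m n : ℕ) {φ : lang.BoundedFormula α n} : IsDelta0 n φ → SigmaFm m n φ
    | ofPi (m n : ℕ) {φ : lang.BoundedFormula α n} : PiFm m n φ → SigmaFm (m + 1) n φ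
    | ex (m n : ℕ) {φ : lang.BoundedFormula α (n + 1)} :
        SigmaFm (m + 1) (n + 1) φ → SigmaFm (m + 1) n φ.ex
  /-- Π_m formulas. -/
  inductive PiFm {α : Type} : ℕ → ∀ n : ℕ, lang.BoundedFormula α n → Prop
    | delta0 (m n : ℕ) {φ : lang.BoundedFormula α n} : IsDelta0 n φ → PiFm m n φ
    | ofSigma (m n : ℕ) {φ : lang.BoundedFormula α n} : SigmaFm m n φ → PiFm (m + 1) n φ
    | all (m n : ℕ) {φ : lang.BoundedFormula α (n + 1)} :
        PiFm (m + 1) (n + 1) φ → PiFm (m + 1) n φ.all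
end

/-- A `k`-ary relation on `M` is Σ_m-definable (with parameters from `M`). -/
def IsSigmaDef (m : ℕ) (M : Type) [lang.Structure M] {k : ℕ} (R : (Fin k → M) → Prop) : Prop :=
  ∃ (p : ℕ) (φ : lang.BoundedFormula (Fin k ⊕ Fin p) 0) (w : Fin p → M),
    SigmaFm m 0 φ ∧ ∀ v : Fin k → M, R v ↔ φ.Realize (Sum.elim v w) finZeroElim

/-- A subset of `M` is Σ_m-definable with parameters. -/
def SigmaDef1 (m : ℕ) (M : Type) [lang.Structure M] (A : Set M) : Prop :=
  IsSigmaDef m M (k := 1) fun v => v 0 ∈ A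

/-- A binary relation on `M` is Σ_m-definable with parameters. -/
def SigmaDef2 (m : ℕ) (M : Type) [lang.Structure M] (R : M → M → Prop) : Prop :=
  IsSigmaDef m M (k := 2) fun v => R (v 0) (v 1)

/-- A ternary relation on `M` is Σ_m-definable with parameters. -/
def SigmaDef3 (m : ℕ) (M : Type) [lang.Structure M] (R : M → M → M → Prop) : Prop :=
  IsSigmaDef m M (k := 3) fun v => R (v 0) (v 1) (v 2)

/-- `M` is a model of PA⁻ (the nonnegative part of a discretely ordered
commutative semiring). -/
structure PAm (M : Type) [lang.Structure M] : Prop where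
  add_assoc : ∀ x y z : M, x + y + z = x + (y + z)
  add_comm : ∀ x y : M, x + y = y + x
  mul_assoc : ∀ x y z : M, x * y * z = x * (y * z)
  mul_comm : ∀ x y : M, x * y = y * x
  ldistrib : ∀ x y z : M, x * (y + z) = x * y + x * z
  add_zero : ∀ x : M, x + 0 = x
  mul_zero : ∀ x : M, x * 0 = 0
  mul_one : ∀ x : M, x * 1 = x
  lt_trans : ∀ x y z : M, x < y → y < z → x < z
  lt_irrefl : ∀ x : M, ¬x < x
  lt_total : ∀ x y : M, x < y ∨ x = y ∨ y < x
  add_lt_add : ∀ x y z : M, x < y → x + z < y + z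
  mul_lt_mul : ∀ x y z : M, x < y → 0 < z → x * z < y * z
  sub_exists : ∀ x y : M, x < y → ∃ z, x + z = y
  zero_lt_one : (0 : M) < 1
  discrete : ∀ x : M, 0 < x → (1 : M) ≤ x
  zero_le : ∀ x : M, (0 : M) ≤ x

/-- `M` satisfies the Σ_m-induction scheme (with parameters). -/
def ISig (m : ℕ) (M : Type) [lang.Structure M] : Prop :=
  ∀ A : Set M, SigmaDef1 m M A → (0 : M) ∈ A → (∀ x, x ∈ A → x + 1 ∈ A) → ∀ x, x ∈ A

/-- `M` satisfies the Σ_m-collection (bounding) scheme (with parameters). -/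
def BSig (m : ℕ) (M : Type) [lang.Structure M] : Prop :=
  ∀ R : M → M → Prop, SigmaDef2 m M R → ∀ a : M,
    (∀ x, x < a → ∃ y, R x y) → ∃ b, ∀ x, x < a → ∃ y, y < b ∧ R x y

section Coding

variable {M : Type} [lang.Structure M]

/-- `z` is the Cantor pair `⟨x, y⟩`: `2z = (x+y)(x+y+1) + 2y`. -/
def IsPairC (z x y : M) : Prop := z + z = (x + y) * (x + y + 1) + (y + y)

/-- Gödel's β-function: `x = a mod ((i+1)·b + 1)`. -/
def BetaC (a b i x : M) : Prop :=
  x < (i + 1) * b + 1 ∧ ∃ q, a = q * ((i + 1) * b + 1) + x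

/-- The sequence coded by `s` (via a Cantor pair of β-function data) has value `x`
at place `i`. -/
def SeqAt (s i x : M) : Prop := ∃ a b, IsPairC s a b ∧ BetaC a b i x

/-- `c` codes the M-finite set `X` of cardinality `card`: `c = ⟨card, s⟩` where `s`
codes the strictly increasing enumeration of `X` of length `card`. -/
def CodesFinset (c : M) (X : Set M) (card : M) : Prop :=
  ∃ s, IsPairC c card s ∧
    (∀ i, i < card → ∃ x, x ∈ X ∧ SeqAt s i x) ∧
    (∀ i j x y, i < j → j < card → SeqAt s i x → SeqAt s j y → x < y) ∧
    (∀ x, x ∈ X ↔ ∃ i, i < card ∧ SeqAt s i x)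

/-- `X` is an M-finite (coded) set. -/
def MFinite (X : Set M) : Prop := ∃ c card : M, CodesFinset c X card

/-- `d` codes an `e`-element subset `D` of `[0, y)`, i.e. an element of `[y]^e`. -/
def CodesTupleIn (d e y : M) (D : Set M) : Prop :=
  CodesFinset d D e ∧ ∀ z ∈ D, z < y

/-- `f` codes a (finite) function defined on all of `[0, a)`. -/
def CodesFunOn (f a : M) : Prop :=
  ∀ x, x < a → (∃ y, SeqAt f x y) ∧ ∀ y y', SeqAt f x y → SeqAt f x y' → y = y'

/-- `X` is an M-coded subset of `[0, a)`. -/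
def MCodedSubset (a : M) (X : Set M) : Prop :=
  MFinite X ∧ ∀ x ∈ X, x < a

end Coding

/-- An `M`-ultrafilter on `a`: an ultrafilter of the Boolean algebra of
M-finite subsets of `[0, a)`. -/
structure MUltra (M : Type) [lang.Structure M] (a : M) where
  sets : Set (Set M)
  mem_coded : ∀ X ∈ sets, MCodedSubset a X
  univ_mem : {x : M | x < a} ∈ sets
  superset_mem : ∀ X Y : Set M, X ∈ sets → MCodedSubset a Y → X ⊆ Y → Y ∈ sets
  inter_mem : ∀ X Y : Set M, X ∈ sets → Y ∈ sets → X ∩ Y ∈ sets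
  empty_not_mem : (∅ : Set M) ∉ sets
  ultra : ∀ X : Set M, MCodedSubset a X → X ∈ sets ∨ {x : M | x < a ∧ x ∉ X} ∈ sets

section Principles

variable (M : Type) [lang.Structure M]

/-- `F` is (the graph of) a Σ_m-definable injection from `[0, y)` into `[0, x)`. -/
def SigmaInjRel (m : ℕ) (F : M → M → Prop) (y x : M) : Prop :=
  SigmaDef2 m M F ∧
    (∀ u, u < y → ∃ v, v < x ∧ F u v) ∧
    (∀ u v v', u < y → F u v → F u v' → v = v') ∧
    (∀ u u' v, u < y → u' < y → F u v → F u' v → u = u')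

/-- There exists a Σ_m-definable injection from `[0, y)` into `[0, x)`. -/
def ExSigmaInj (m : ℕ) (y x : M) : Prop := ∃ F : M → M → Prop, SigmaInjRel M m F y x

/-- There exists a Σ_m-definable injection from all of `M` into `[0, a)`. -/
def SigmaInjWhole (m : ℕ) (a : M) : Prop :=
  ∃ F : M → M → Prop, SigmaDef2 m M F ∧
    (∀ u, ∃ v, v < a ∧ F u v) ∧
    (∀ u v v', F u v → F u v' → v = v') ∧
    (∀ u u' v, F u v → F u' v → u = u')

/-- CARD(Σ_m): no Σ_m-definable multivalued map sends `M` injectively below `a`. -/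
def CARD (m : ℕ) : Prop :=
  ∀ F : M → M → Prop, SigmaDef2 m M F → ∀ a : M,
    (∀ x, ∃ y, y < a ∧ F x y) →
      ∃ x0 x1 y, x0 ≠ x1 ∧ y < a ∧ F x0 y ∧ F x1 y

/-- GPHP(Σ_m): for every `x` there is `y` with no Σ_m-definable injection of
`[0,y)` into `[0,x)`. -/
def GPHP (m : ℕ) : Prop := ∀ x : M, ∃ y : M, ¬ExSigmaInj M m y x

/-- WPHP(Σ_m): for `x > 0` there is no Σ_m-definable injection of `[0,2x)` into `[0,x)`. -/
def WPHP (m : ℕ) : Prop := ∀ x : M, 0 < x → ¬ExSigmaInj M m (x + x) x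

/-- `C` is a Σ_m-definable `k`-coloring of `[y]^e` (acting on codes of
`e`-element subsets of `[0,y)`, independently of the chosen code). -/
def IsColoring (m : ℕ) (e y k : M) (C : M → M → Prop) : Prop :=
  SigmaDef2 m M C ∧
    (∀ d D, CodesTupleIn d e y D → ∃ i, i < k ∧ C d i) ∧
    (∀ d d' D i i', CodesTupleIn d e y D → CodesTupleIn d' e y D → C d i → C d' i' → i = i')

/-- FRT^e_k(Σ_m): every Σ_m-definable `k`-coloring of some `[y]^e` has an
M-finite homogeneous set of cardinality `x`, for every `x`. -/
def FRT (m : ℕ) (e k : M) : Prop :=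
  ∀ x : M, ∃ y : M, ∀ C : M → M → Prop, IsColoring M m e y k C →
    ∃ (c : M) (H : Set M), CodesFinset c H x ∧ (∀ z ∈ H, z < y) ∧
      ∃ i, ∀ d D, CodesFinset d D e → D ⊆ H → C d i

/-- fairFRT^e_k(Σ_m): the homogeneous set is required to be given as the range of a
Σ_m-definable injection from `[0,x)` into `[0,y)`. -/
def FairFRT (m : ℕ) (e k : M) : Prop :=
  ∀ x : M, ∃ y : M, ∀ C : M → M → Prop, IsColoring M m e y k C →
    ∃ H : M → M → Prop, SigmaInjRel M m H x y ∧
      ∃ i, ∀ d D, CodesFinset d D e → (∀ z ∈ D, ∃ u, u < x ∧ H u z) → C d i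

/-- `C` is a Σ_m-definable `k`-coloring of `[0, y)`. -/
def IsColoring1 (m : ℕ) (y k : M) (C : M → M → Prop) : Prop :=
  SigmaDef2 m M C ∧
    (∀ z, z < y → ∃ i, i < k ∧ C z i) ∧
    (∀ z i i', z < y → C z i → C z i' → i = i')

/-- FRT¹_k(Σ_m): every Σ_m-definable `k`-coloring of some `[0,y)` has an M-finite
homogeneous set of cardinality `x`, for every `x`. -/
def FRT1 (m : ℕ) (k : M) : Prop :=
  ∀ x : M, ∃ y : M, ∀ C : M → M → Prop, IsColoring1 M m y k C →
    ∃ (c : M) (H : Set M), CodesFinset c H x ∧ (∀ z ∈ H, z < y) ∧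
      ∃ i, ∀ z ∈ H, C z i

/-- fairFRT¹_k(Σ_m). -/
def FairFRT1 (m : ℕ) (k : M) : Prop :=
  ∀ x : M, ∃ y : M, ∀ C : M → M → Prop, IsColoring1 M m y k C →
    ∃ H : M → M → Prop, SigmaInjRel M m H x y ∧
      ∃ i, ∀ u v, u < x → H u v → C v i

end Principles

section Approx

variable {M : Type} [lang.Structure M]

/-- `f` is (the graph of) a partial function. -/
def IsPartialFun (f : M → M → Prop) : Prop := ∀ x y y', f x y → f x y' → y = y'

/-- `s` codes an approximation to the partial function `f` of length `b`. -/
def IsApprox (f : M → M → Prop) (s b : M) : Prop :=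
  (∀ i, i < b → ∃ v, SeqAt s i v) ∧
    (∀ i u v x y, i + 1 < b → SeqAt s i u → SeqAt s (i + 1) v → x ≤ u → f x y → y ≤ v)

/-- `s` codes a `g`-stretched approximation to the partial function `f` of length `b`. -/
def IsStretchedApprox (f g : M → M → Prop) (s b : M) : Prop :=
  (∀ i, i < b → ∃ v, SeqAt s i v) ∧
    (∀ i u w v x y, i + 1 < b → SeqAt s i u → g u w → SeqAt s (i + 1) v →
      x ≤ w → f x y → y ≤ v)

/-- The eventual (limit) value of `fun s => h s ·` is `x`. -/
def EvLim (h : M → M → Prop) (x : M) : Prop := ∃ s : M, ∀ t, s < t → h t x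

end Approx

/-- PΣ_m: every partial Σ_m-definable function admits approximations of every length. -/
def PSig (m : ℕ) (M : Type) [lang.Structure M] : Prop :=
  ∀ f : M → M → Prop, SigmaDef2 m M f → IsPartialFun f → ∀ b : M, ∃ s, IsApprox f s b

section Extensions

variable (M N : Type) [lang.Structure M] [lang.Structure N]

/-- `g : M → N` is Σ_m-elementary: Σ_m formulas with parameters from `M` transfer. -/
def SigmaElem (m : ℕ) (g : M → N) : Prop :=
  ∀ (p : ℕ) (φ : lang.BoundedFormula (Fin p) 0), SigmaFm m 0 φ →
    ∀ v : Fin p → M, (φ.Realize v finZeroElim ↔ φ.Realize (g ∘ v) finZeroElim)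

/-- The extension `g : M → N` is cofinal. -/
def Cofinal (g : M → N) : Prop := ∀ z : N, ∃ x : M, z ≤ g x

/-- `[0,a]^M = [0,a]^N`: every element of `N` below `g a` comes from `M`. -/
def SameBelow (g : M → N) (a : M) : Prop := ∀ z : N, z ≤ g a → ∃ x : M, g x = z

end Extensions

section Ramsey

variable {M : Type} [lang.Structure M]

/-- `f` is an M-coded `k`-coloring of `[y]^e` (assigning colors to codes of
`e`-subsets of `[0,y)`, independently of the code). -/
def CodedColoring (f e y k : M) : Prop :=
  (∀ d D, CodesTupleIn d e y D → ∃ i, i < k ∧ SeqAt f d i) ∧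
    (∀ d d' D i i', CodesTupleIn d e y D → CodesTupleIn d' e y D →
      SeqAt f d i → SeqAt f d' i' → i = i')

/-- The coded coloring `f` of `[y]^e` has an M-coded homogeneous set of cardinality `x`. -/
def CodedHomog (f e y x : M) : Prop :=
  ∃ (c : M) (H : Set M), CodesFinset c H x ∧ (∀ z ∈ H, z < y) ∧
    ∃ i, ∀ d D, CodesFinset d D e → D ⊆ H → SeqAt f d i

/-- `y = r(x, e, k)`: `y` is the least size guaranteeing coded homogeneous sets of
cardinality `x` for all coded `k`-colorings of `e`-subsets. -/
def IsRamsey (x e k y : M) : Prop :=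
  (∀ f, CodedColoring f e y k → CodedHomog f e y x) ∧
    (∀ y', y' < y → ∃ f, CodedColoring f e y' k ∧ ¬CodedHomog f e y' x)

/-- `y = r^(b)(x, e, k)`: the `b`-th iterate of the Ramsey function inside `M`. -/
def IterRamsey (x e k b y : M) : Prop :=
  ∃ s : M, SeqAt s 0 x ∧ SeqAt s b y ∧ (∀ i, i ≤ b → ∃ u, SeqAt s i u) ∧
    (∀ i u v, i < b → SeqAt s i u → SeqAt s (i + 1) v → IsRamsey u e k v)

end Ramsey

end ArithFC

/-
Fix a nonprincipal ultrafilter `U` on `ℕ` and let `M` be the ultrapower of `ℕ` by the functions with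
a Σ_{n+1} graph. Witnesses and counterexamples for Σ_n and Π_n formulas can be chosen by functions
of this class, so Łoś's theorem holds for these formulas. If a Σ_n set of `M` contains 0 but not
every element, choosing in almost every coordinate a place where the induction step fails produces
an element of `M` where it fails, so `M` satisfies IΣ_n. Σ_{n+1} formulas true in `M` are true in
almost every coordinate, and conversely if they hold throughout a Π_{n+1} set belonging to `U`.

Every element of `M` is represented by some `f` with an index `k` with respect to a universal
Σ_{n+1} predicate, and `k < i` for almost every `i`. Hence, for almost every `i`, some index below
`i` has the value `f i` at `i`. Choosing it by Σ_{n+1} uniformization defines an injection of `M`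
into the elements below the class of the identity function.
-/

namespace ArithFC

/-! ### The arithmetical hierarchy on `ℕ` -/

theorem forall_lt_exists_iff {R : ℕ → ℕ → Prop} {n : ℕ} :
    (∀ y < n, ∃ z, R y z) ↔ ∃ b, ∀ y < n, ∃ z < b, R y z := by
  refine ⟨fun h => ?_, fun ⟨b, h⟩ y hy => (h y hy).imp fun _ => And.right⟩
  choose! f hf using h
  exact ⟨(Finset.range n).sup f + 1, fun y hy =>
    ⟨f y, Nat.lt_succ_of_le (Finset.le_sup (Finset.mem_range.2 hy)), hf y hy⟩⟩

/-- The class Σ_m of the arithmetical hierarchy, for predicates on a primcodable type. The bottom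
level consists of the primitive recursive predicates. -/
def SigmaPred : ℕ → ∀ {γ : Type*} [Primcodable γ], (γ → Prop) → Prop
  | 0, _, _, P => PrimrecPred P
  | m + 1, γ, _, P => ∃ Q : γ × ℕ → Prop, SigmaPred m Q ∧ ∀ x, P x ↔ ∃ y, ¬Q (x, y)

namespace SigmaPred

variable {γ δ : Type*} [Primcodable γ] [Primcodable δ] {m k : ℕ}

theorem of_iff {P P' : γ → Prop} (hP : SigmaPred m P) (h : ∀ x, P' x ↔ P x) : SigmaPred m P' := by
  rwa [show P' = P from funext fun x => propext (h x)]

theorem comp {P : δ → Prop} {f : γ → δ} (hP : SigmaPred m P) (hf : Primrec f) :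
    SigmaPred m fun x => P (f x) := by
  induction m generalizing γ δ with
  | zero => exact PrimrecPred.comp hP hf
  | succ m ih =>
    obtain ⟨Q, hQ, hPQ⟩ := hP
    exact ⟨fun p => Q (f p.1, p.2), ih hQ ((hf.comp .fst).pair .snd), fun x => hPQ (f x)⟩

theorem not {P : γ → Prop} (hP : SigmaPred m P) : SigmaPred (m + 1) fun x => ¬P x :=
  ⟨fun p => P p.1, hP.comp .fst, fun _ => by simp⟩

theorem succ {P : γ → Prop} (hP : SigmaPred m P) : SigmaPred (m + 1) P := by
  induction m generalizing γ with
  | zero => exact ⟨fun p => ¬P p.1, (PrimrecPred.not hP).comp .fst, fun _ => by simp⟩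
  | succ m ih =>
    obtain ⟨Q, hQ, hPQ⟩ := hP
    exact ⟨Q, ih hQ, hPQ⟩

theorem mono {P : γ → Prop} (hP : SigmaPred m P) (h : m ≤ k) : SigmaPred k P :=
  Nat.le_induction hP (fun _ _ => succ) k h

theorem of_primrecPred {P : γ → Prop} (hP : PrimrecPred P) : SigmaPred m P :=
  mono (m := 0) hP m.zero_le

private theorem and_or {P Q : γ → Prop} (hP : SigmaPred m P) (hQ : SigmaPred m Q) :
    (SigmaPred m fun x => P x ∧ Q x) ∧ SigmaPred m fun x => P x ∨ Q x := by
  induction m generalizing γ with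
  | zero => exact ⟨PrimrecPred.and hP hQ, PrimrecPred.or hP hQ⟩
  | succ m ih =>
    obtain ⟨P₁, hP₁, hP⟩ := hP
    obtain ⟨Q₁, hQ₁, hQ⟩ := hQ
    have unpair₂ : Primrec fun p : γ × ℕ => p.2.unpair := Primrec.unpair.comp .snd
    have hP₂ : SigmaPred m fun p : γ × ℕ => P₁ (p.1, p.2.unpair.1) :=
      hP₁.comp (Primrec.fst.pair (Primrec.fst.comp unpair₂))
    have hQ₂ : SigmaPred m fun p : γ × ℕ => Q₁ (p.1, p.2.unpair.2) :=
      hQ₁.comp (Primrec.fst.pair (Primrec.snd.comp unpair₂))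
    refine ⟨⟨_, (ih hP₂ hQ₂).2, fun x => ?_⟩, ⟨_, (ih hP₂ hQ₂).1, fun x => ?_⟩⟩
    · simp only [hP, hQ, not_or]
      exact ⟨fun ⟨⟨y, hy⟩, z, hz⟩ => ⟨Nat.pair y z, by simpa using ⟨hy, hz⟩⟩,
        fun ⟨y, hy⟩ => ⟨⟨_, hy.1⟩, _, hy.2⟩⟩
    · simp only [hP, hQ, not_and_or]
      refine ⟨?_, fun ⟨y, hy⟩ => hy.imp (⟨_, ·⟩) (⟨_, ·⟩)⟩
      rintro (⟨y, hy⟩ | ⟨z, hz⟩)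
      · exact ⟨Nat.pair y 0, .inl (by simpa using hy)⟩
      · exact ⟨Nat.pair 0 z, .inr (by simpa using hz)⟩

theorem and {P Q : γ → Prop} (hP : SigmaPred m P) (hQ : SigmaPred m Q) :
    SigmaPred m fun x => P x ∧ Q x :=
  (and_or hP hQ).1

theorem or {P Q : γ → Prop} (hP : SigmaPred m P) (hQ : SigmaPred m Q) :
    SigmaPred m fun x => P x ∨ Q x :=
  (and_or hP hQ).2

theorem forall_fin {P : Fin k → γ → Prop} (hP : ∀ j, SigmaPred m (P j)) :
    SigmaPred m fun x => ∀ j, P j x := by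
  induction k with
  | zero => exact of_primrecPred ((Primrec.eq.comp (.const 0) (.const 0)).of_eq fun _ => by simp)
  | succ k ih =>
    exact ((hP 0).and (ih fun j => hP j.succ)).of_iff fun _ => Fin.forall_fin_succ

theorem exists_nat {P : γ × ℕ → Prop} (hP : SigmaPred (m + 1) P) :
    SigmaPred (m + 1) fun x => ∃ y, P (x, y) := by
  obtain ⟨Q, hQ, hPQ⟩ := hP
  have unpair₂ : Primrec fun p : γ × ℕ => p.2.unpair := Primrec.unpair.comp .snd
  refine ⟨fun p => Q ((p.1, p.2.unpair.1), p.2.unpair.2), hQ.comp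
    ((Primrec.fst.pair (Primrec.fst.comp unpair₂)).pair (Primrec.snd.comp unpair₂)), fun x => ?_⟩
  simp only [hPQ]
  exact ⟨fun ⟨y, z, h⟩ => ⟨Nat.pair y z, by simpa using h⟩, fun ⟨w, h⟩ => ⟨_, _, h⟩⟩

theorem exists_primcodable [Nonempty δ] {P : γ × δ → Prop} (hP : SigmaPred (m + 1) P) :
    SigmaPred (m + 1) fun x => ∃ y, P (x, y) := by
  obtain ⟨d⟩ := ‹Nonempty δ›
  have decodeD : Primrec fun p : γ × ℕ => ((Encodable.decode p.2 : Option δ)).getD d :=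
    Primrec.option_getD.comp (Primrec.decode.comp .snd) (.const d)
  refine (hP.comp (Primrec.fst.pair decodeD)).exists_nat.of_iff fun x => ?_
  exact ⟨fun ⟨y, h⟩ => ⟨Encodable.encode y, by simpa using h⟩, fun ⟨_, h⟩ => ⟨_, h⟩⟩

private theorem forall_lt_and_exists_lt {P : γ × ℕ → Prop} (hP : SigmaPred m P) :
    (SigmaPred m fun p : γ × ℕ => ∀ y < p.2, P (p.1, y)) ∧
      SigmaPred m fun p : γ × ℕ => ∃ y < p.2, P (p.1, y) := by
  induction m generalizing γ with
  | zero =>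
    have hR : PrimrecRel fun (y : ℕ) (x : γ) => P (x, y) :=
      PrimrecPred.comp hP (Primrec.snd.pair .fst)
    have range : Primrec fun p : γ × ℕ => List.range p.2 := Primrec.list_range.comp .snd
    exact ⟨(hR.forall_mem_list.comp range .fst).of_eq fun p => by simp,
      (hR.exists_mem_list.comp range .fst).of_eq fun p => by simp⟩
  | succ m ih =>
    refine ⟨?_, ?_⟩
    · obtain ⟨Q, hQ, hPQ⟩ := hP
      have forall_z : SigmaPred m fun p : ((γ × ℕ) × ℕ) × ℕ => ∀ z < p.1.2, Q ((p.1.1.1, p.2), z) :=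
        (ih hQ).1.comp (f := fun p : ((γ × ℕ) × ℕ) × ℕ => ((p.1.1.1, p.2), p.1.2))
          (((Primrec.fst.comp (Primrec.fst.comp .fst)).pair .snd).pair (Primrec.snd.comp .fst))
      have exists_y : SigmaPred m fun p : (γ × ℕ) × ℕ =>
          ∃ y < p.1.2, ∀ z < p.2, Q ((p.1.1, y), z) :=
        (ih forall_z).2.comp (f := fun p : (γ × ℕ) × ℕ => (p, p.1.2))
          (Primrec.id.pair (Primrec.snd.comp .fst))
      refine ⟨_, exists_y, fun p => ?_⟩
      simp only [hPQ]
      rw [forall_lt_exists_iff]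
      push Not
      rfl
    · exact ((of_primrecPred (Primrec.nat_lt.comp .snd (Primrec.snd.comp .fst))).and
        (hP.comp ((Primrec.fst.comp .fst).pair .snd)) :
          SigmaPred (m + 1) fun q : (γ × ℕ) × ℕ => q.2 < q.1.2 ∧ P (q.1.1, q.2)).exists_nat

theorem forall_lt {P : γ × ℕ → Prop} (hP : SigmaPred m P) :
    SigmaPred m fun p : γ × ℕ => ∀ y < p.2, P (p.1, y) :=
  (forall_lt_and_exists_lt hP).1

/-- A least pair of a value and a witness for it exists whenever a value does, and being the least
one is a conjunction of a Σ and a Π condition of the level below. -/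
theorem exists_uniformization {R : γ × ℕ → Prop} (hR : SigmaPred (m + 1) R) :
    ∃ R' : γ × ℕ → Prop, SigmaPred (m + 1) R' ∧ (∀ p, R' p → R p) ∧
      (∀ x y y', R' (x, y) → R' (x, y') → y = y') ∧ ∀ x, (∃ y, R (x, y)) → ∃ y, R' (x, y) := by
  obtain ⟨Q, hQ, hRQ⟩ := hR
  let IsWitness (x : γ) (w : ℕ) : Prop := ¬Q ((x, w.unpair.1), w.unpair.2)
  let IsLeastWitness (x : γ) (w : ℕ) : Prop := IsWitness x w ∧ ∀ u < w, ¬IsWitness x u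
  have unpair₂ : Primrec fun p : γ × ℕ => p.2.unpair := Primrec.unpair.comp .snd
  have not_isWitness : SigmaPred m fun p : γ × ℕ => ¬IsWitness p.1 p.2 :=
    (hQ.comp ((Primrec.fst.pair (Primrec.fst.comp unpair₂)).pair
      (Primrec.snd.comp unpair₂))).of_iff fun _ => not_not
  have isLeastWitness : SigmaPred (m + 1) fun p : γ × ℕ => IsLeastWitness p.1 p.2 :=
    (not_isWitness.not.and not_isWitness.forall_lt.succ).of_iff fun _ => by
      simp only [not_not, IsLeastWitness]
  have unique {x w w'} (h : IsLeastWitness x w) (h' : IsLeastWitness x w') : w = w' :=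
    le_antisymm (not_lt.1 fun hlt => h.2 _ hlt h'.1) (not_lt.1 fun hlt => h'.2 _ hlt h.1)
  refine ⟨fun p => ∃ w, w.unpair.1 = p.2 ∧ IsLeastWitness p.1 w, ?_, ?_, ?_, ?_⟩
  · exact ((of_primrecPred (Primrec.eq.comp (Primrec.fst.comp (Primrec.unpair.comp .snd))
      (Primrec.snd.comp .fst))).and (isLeastWitness.comp ((Primrec.fst.comp .fst).pair .snd)) :
        SigmaPred (m + 1) fun q : (γ × ℕ) × ℕ =>
          q.2.unpair.1 = q.1.2 ∧ IsLeastWitness q.1.1 q.2).exists_nat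
  · rintro ⟨x, y⟩ ⟨w, rfl, hw, -⟩
    exact (hRQ _).2 ⟨_, hw⟩
  · rintro x y y' ⟨w, rfl, hw⟩ ⟨w', rfl, hw'⟩
    rw [unique hw hw']
  · rintro x ⟨y, hy⟩
    obtain ⟨z, hz⟩ := (hRQ _).1 hy
    classical
    have exists_witness : ∃ w, IsWitness x w := ⟨Nat.pair y z, by simpa [IsWitness] using hz⟩
    exact ⟨_, Nat.find exists_witness, rfl, Nat.find_spec exists_witness,
      fun _ => Nat.find_min exists_witness⟩

open Nat.Partrec (Code)

private theorem exists_universal_one : ∃ V : ℕ × ℕ → Prop, SigmaPred 1 V ∧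
    ∀ P : ℕ → Prop, SigmaPred 1 P → ∃ e, ∀ x, P x ↔ V (e, x) := by
  let Halts (e x : ℕ) : Prop := ∃ k, ¬Code.evaln k (Denumerable.ofNat Code e) x = none
  have halts_iff (c : Code) (x : ℕ) : Halts (Encodable.encode c) x ↔ (c.eval x).Dom := by
    simp only [Halts, Denumerable.ofNat_encode, ← ne_eq, Option.ne_none_iff_exists',
      Part.dom_iff_mem, Code.evaln_complete, Option.mem_def]
    exact exists_comm
  refine ⟨fun p => Halts p.1 p.2,
    ⟨fun q => Code.evaln q.2 (Denumerable.ofNat Code q.1.1) q.1.2 = none, ?_, fun _ => Iff.rfl⟩, ?_⟩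
  · exact Primrec.eq.comp (Code.primrec_evaln.comp ((Primrec.snd.pair ((Primrec.ofNat Code).comp
      (Primrec.fst.comp .fst))).pair (Primrec.snd.comp .fst))) (.const none)
  · rintro P ⟨Q, ⟨_, hQ⟩, hPQ⟩
    have search : Partrec fun x : ℕ => Nat.rfind fun y => Part.some !decide (Q (x, y)) :=
      Partrec.rfind (Primrec.not.comp hQ).to_comp.partrec
    obtain ⟨c, hc⟩ := Code.exists_code.1 (Partrec.nat_iff.1 search)
    refine ⟨Encodable.encode c, fun x => (hPQ x).trans ((halts_iff c x).trans ?_).symm⟩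
    rw [hc]
    exact Nat.rfind_dom.trans (by simp)

theorem exists_universal (m : ℕ) : ∃ V : ℕ × ℕ → Prop, SigmaPred (m + 1) V ∧
    ∀ P : ℕ → Prop, SigmaPred (m + 1) P → ∃ e, ∀ x, P x ↔ V (e, x) := by
  induction m with
  | zero => exact exists_universal_one
  | succ m ih =>
    obtain ⟨V, hV, universal⟩ := ih
    have natPair₂ : Primrec fun q : (ℕ × ℕ) × ℕ => (q.1.1, Nat.pair q.1.2 q.2) :=
      (Primrec.fst.comp .fst).pair (Primrec₂.natPair.comp (Primrec.snd.comp .fst) .snd)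
    refine ⟨fun p => ∃ y, ¬V (p.1, Nat.pair p.2 y), ⟨_, hV.comp natPair₂, fun _ => Iff.rfl⟩, ?_⟩
    rintro P ⟨Q, hQ, hPQ⟩
    obtain ⟨e, he⟩ := universal (fun x => Q x.unpair) (hQ.comp Primrec.unpair)
    exact ⟨e, fun x => by simp only [hPQ, ← he, Nat.unpair_pair]⟩

end SigmaPred

/-- The functions with a Σ_m graph. -/
def SigmaFun (m : ℕ) {γ δ : Type*} [Primcodable γ] [Primcodable δ] (f : γ → δ) : Prop :=
  SigmaPred m fun p : γ × δ => f p.1 = p.2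

section SigmaFun

variable {γ δ ε : Type*} [Primcodable γ] [Primcodable δ] [Primcodable ε] {m k : ℕ}

theorem SigmaFun.of_primrec {f : γ → δ} (hf : Primrec f) : SigmaFun m f :=
  .of_primrecPred (Primrec.eq.comp (hf.comp .fst) .snd)

theorem SigmaPred.comp_sigmaFun {P : δ → Prop} {f : γ → δ} (hP : SigmaPred (m + 1) P)
    (hf : SigmaFun (m + 1) f) : SigmaPred (m + 1) fun x => P (f x) := by
  rcases isEmpty_or_nonempty δ with _ | _
  · have := Function.isEmpty f
    exact .of_primrecPred ((Primrec.eq.comp (.const 0) (.const 0)).of_eq isEmptyElim)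
  · refine (SigmaPred.and hf (hP.comp Primrec.snd)).exists_primcodable.of_iff fun x => ?_
    simp

theorem SigmaFun.pair {f : γ → δ} {g : γ → ε} (hf : SigmaFun m f) (hg : SigmaFun m g) :
    SigmaFun m fun x => (f x, g x) :=
  ((SigmaPred.comp hf (Primrec.fst.pair (Primrec.fst.comp .snd))).and
    (SigmaPred.comp hg (Primrec.fst.pair (Primrec.snd.comp .snd)))).of_iff fun _ => Prod.ext_iff

theorem SigmaFun.comp_primrec {f : δ → ε} {g : γ → δ} (hf : SigmaFun m f) (hg : Primrec g) :
    SigmaFun m fun x => f (g x) :=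
  SigmaPred.comp hf ((hg.comp .fst).pair .snd)

theorem SigmaFun.comp {f : δ → ε} {g : γ → δ} (hf : SigmaFun (m + 1) f)
    (hg : SigmaFun (m + 1) g) : SigmaFun (m + 1) fun x => f (g x) :=
  SigmaPred.comp_sigmaFun hf ((hg.comp_primrec Primrec.fst).pair (.of_primrec .snd))

theorem SigmaFun.comp₂ {ζ : Type*} [Primcodable ζ] {F : δ → ε → ζ} {f : γ → δ} {g : γ → ε}
    (hF : Primrec₂ F) (hf : SigmaFun (m + 1) f) (hg : SigmaFun (m + 1) g) :
    SigmaFun (m + 1) fun x => F (f x) (g x) :=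
  (SigmaFun.of_primrec hF).comp (hf.pair hg)

theorem SigmaFun.pi_fin {f : Fin k → γ → ℕ} (hf : ∀ j, SigmaFun m (f j)) :
    SigmaFun m fun x j => f j x := by
  have eval (j : Fin k) : Primrec fun p : γ × (Fin k → ℕ) => p.2 j :=
    Primrec.fin_app.comp .snd (.const j)
  exact (SigmaPred.forall_fin fun j => SigmaPred.comp (hf j) (Primrec.fst.pair (eval j))).of_iff
    fun _ => funext_iff

theorem exists_sigmaFun_choice {R : γ × ℕ → Prop} {D : γ → Prop} (hR : SigmaPred (m + 1) R)
    (hD : SigmaPred (m + 1) fun x => ¬D x) (h : ∀ x, D x → ∃ y, R (x, y)) :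
    ∃ g : γ → ℕ, SigmaFun (m + 1) g ∧ ∀ x, D x → R (x, g x) := by
  obtain ⟨R', hR', sub, unique, total⟩ := (hR.or (hD.comp Primrec.fst)).exists_uniformization
  choose g hg using fun x => total x <| (em (D x)).elim
    (fun hx => (h x hx).imp fun _ => .inl) fun hx => ⟨0, .inr hx⟩
  refine ⟨g, hR'.of_iff fun p => ⟨fun hp => ?_, fun hp => unique _ _ _ (hg _) hp⟩, fun x hx => ?_⟩
  · rw [← Prod.mk.eta (p := p), ← hp]
    exact hg p.1
  · exact (sub _ (hg x)).resolve_right (not_not.2 hx)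

theorem exists_sigmaFun_and_not_succ {P : γ × ℕ → Prop} {f : γ → ℕ}
    (hP : SigmaPred (m + 1) P) (not_P : SigmaPred (m + 1) fun p => ¬P p) (hf : SigmaFun (m + 1) f) :
    ∃ g, SigmaFun (m + 1) g ∧ ∀ x, P (x, 0) → ¬P (x, f x) → P (x, g x) ∧ ¬P (x, g x + 1) := by
  have step (x : γ) (h : P (x, 0) ∧ ¬P (x, f x)) : ∃ y, P (x, y) ∧ ¬P (x, y + 1) := by
    by_contra! h'
    exact h.2 (Nat.rec h.1 h' (f x))
  have hR : SigmaPred (m + 1) fun p : γ × ℕ => P p ∧ ¬P (p.1, p.2 + 1) :=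
    hP.and (not_P.comp (Primrec.fst.pair (Primrec.succ.comp .snd)))
  have hD : SigmaPred (m + 1) fun x => ¬(P (x, 0) ∧ ¬P (x, f x)) :=
    ((not_P.comp (Primrec.id.pair (.const 0))).or
      (hP.comp_sigmaFun (SigmaFun.pair (.of_primrec .id) hf))).of_iff fun _ =>
        not_and_or.trans (or_congr_right not_not)
  obtain ⟨g, hg, hgR⟩ := exists_sigmaFun_choice hR hD step
  exact ⟨g, hg, fun x h0 hfx => hgR x ⟨h0, hfx⟩⟩

/-- `H ((i, x), e)` says that `e` is the chosen index below `i` of a partial function taking the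
value `x` at `i`. -/
theorem exists_indexing_below (m : ℕ) : ∃ H : (ℕ × ℕ) × ℕ → Prop, SigmaPred (m + 1) H ∧
    (∀ i x e, H ((i, x), e) → e < i) ∧
    (∀ i x e e', H ((i, x), e) → H ((i, x), e') → e = e') ∧
    (∀ i x x' e, H ((i, x), e) → H ((i, x'), e) → x = x') ∧
    ∀ f : ℕ → ℕ, SigmaFun (m + 1) f → ∃ k, ∀ i, k < i → ∃ e, H ((i, f i), e) := by
  obtain ⟨V, hV, universal⟩ := SigmaPred.exists_universal m
  have hV₂ : SigmaPred (m + 1) fun q : (ℕ × ℕ) × ℕ => V (q.1.1, Nat.pair q.1.2 q.2) :=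
    hV.comp ((Primrec.fst.comp .fst).pair (Primrec₂.natPair.comp (Primrec.snd.comp .fst) .snd))
  obtain ⟨W, hW, W_sub, W_unique, W_total⟩ := hV₂.exists_uniformization
  have hW₂ : SigmaPred (m + 1) fun q : (ℕ × ℕ) × ℕ => q.2 < q.1.1 ∧ W ((q.2, q.1.1), q.1.2) :=
    (SigmaPred.of_primrecPred (Primrec.nat_lt.comp .snd (Primrec.fst.comp .fst))).and
      (hW.comp ((Primrec.snd.pair (Primrec.fst.comp .fst)).pair (Primrec.snd.comp .fst)))
  obtain ⟨H, hH, H_sub, H_unique, H_total⟩ := hW₂.exists_uniformization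
  refine ⟨H, hH, fun i x e h => (H_sub _ h).1, fun i x => H_unique (i, x), fun i x x' e h h' =>
    W_unique (e, i) x x' (H_sub _ h).2 (H_sub _ h').2, fun f hf => ?_⟩
  obtain ⟨k, hk⟩ := universal (fun w => f w.unpair.1 = w.unpair.2)
    (SigmaPred.comp hf Primrec.unpair)
  have graph_iff (i x : ℕ) : f i = x ↔ V (k, Nat.pair i x) := by simp only [← hk, Nat.unpair_pair]
  refine ⟨k, fun i hi => H_total _ ⟨k, hi, ?_⟩⟩
  obtain ⟨x, hx⟩ := W_total (k, i) ⟨f i, (graph_iff i _).1 rfl⟩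
  rwa [(graph_iff i x).2 (W_sub _ hx)]

end SigmaFun

/-! ### Primitive recursive predicates are Σ₁-definable -/

/-- Polynomial functions of an environment `e : ι → ℕ`: the values of the terms of `lang`. -/
inductive PolyFun {ι : Type} : ((ι → ℕ) → ℕ) → Prop
  | var (i : ι) : PolyFun fun e => e i
  | zero : PolyFun fun _ => 0
  | one : PolyFun fun _ => 1
  | add {f g : (ι → ℕ) → ℕ} : PolyFun f → PolyFun g → PolyFun fun e => f e + g e
  | mul {f g : (ι → ℕ) → ℕ} : PolyFun f → PolyFun g → PolyFun fun e => f e * g e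

/-- The relations on an environment `e : ι → ℕ` expressed by Δ₀ formulas. A bound variable becomes
the new variable `none` of an environment indexed by `Option ι`. -/
inductive Delta0Rel : ∀ {ι : Type}, ((ι → ℕ) → Prop) → Prop
  | false {ι : Type} : Delta0Rel fun _ : ι → ℕ => False
  | eq {ι : Type} {f g : (ι → ℕ) → ℕ} :
      PolyFun f → PolyFun g → Delta0Rel fun e => f e = g e
  | lt {ι : Type} {f g : (ι → ℕ) → ℕ} :
      PolyFun f → PolyFun g → Delta0Rel fun e => f e < g e
  | imp {ι : Type} {R S : (ι → ℕ) → Prop} :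
      Delta0Rel R → Delta0Rel S → Delta0Rel fun e => R e → S e
  | ball {ι : Type} {f : (ι → ℕ) → ℕ} {R : (Option ι → ℕ) → Prop} :
      PolyFun f → Delta0Rel R → Delta0Rel fun e => ∀ x < f e, R (Option.elim' x e)

/-- The relations on an environment `e : ι → ℕ` expressed by Σ₁ formulas. -/
def Sigma1Rel {ι : Type} (R : (ι → ℕ) → Prop) : Prop :=
  ∃ Q : (Option ι → ℕ) → Prop, Delta0Rel Q ∧ ∀ e, R e ↔ ∃ y, Q (Option.elim' y e)

/-- The functions of an environment whose graph is expressed by a Σ₁ formula, the value being the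
variable `none`. -/
def Sigma1Fun {ι : Type} (f : (ι → ℕ) → ℕ) : Prop :=
  Sigma1Rel fun e : Option ι → ℕ => f (fun i => e (some i)) = e none

section Delta0Rel

variable {ι κ : Type} {R S : (ι → ℕ) → Prop} {f g : (ι → ℕ) → ℕ}

theorem PolyFun.rename (hf : PolyFun f) (ρ : ι → κ) : PolyFun fun e => f fun i => e (ρ i) := by
  induction hf with
  | var i => exact .var _
  | zero => exact .zero
  | one => exact .one
  | add _ _ ihf ihg => exact ihf.add ihg
  | mul _ _ ihf ihg => exact ihf.mul ihg

theorem Delta0Rel.of_iff (hR : Delta0Rel R) (h : ∀ e, S e ↔ R e) : Delta0Rel S := by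
  rwa [show S = R from funext fun e => propext (h e)]

theorem elim'_comp_option_map {α : Type} (ρ : ι → κ) (x : α) (e : κ → α) :
    (fun o => Option.elim' x e (o.map ρ)) = Option.elim' x fun i => e (ρ i) :=
  funext fun o => by cases o <;> rfl

theorem Delta0Rel.rename (hR : Delta0Rel R) (ρ : ι → κ) :
    Delta0Rel fun e => R fun i => e (ρ i) := by
  induction hR generalizing κ with
  | false => exact .false
  | eq hf hg => exact .eq (hf.rename ρ) (hg.rename ρ)
  | lt hf hg => exact .lt (hf.rename ρ) (hg.rename ρ)
  | imp _ _ ihR ihS => exact (ihR ρ).imp (ihS ρ)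
  | ball hf _ ih =>
    exact (Delta0Rel.ball (hf.rename ρ) (ih (Option.map ρ))).of_iff fun e => by
      simp only [elim'_comp_option_map]

theorem Delta0Rel.not (hR : Delta0Rel R) : Delta0Rel fun e => ¬R e :=
  hR.imp .false

theorem Delta0Rel.and (hR : Delta0Rel R) (hS : Delta0Rel S) : Delta0Rel fun e => R e ∧ S e :=
  (hR.imp hS.not).not.of_iff fun _ => by tauto

theorem Delta0Rel.or (hR : Delta0Rel R) (hS : Delta0Rel S) : Delta0Rel fun e => R e ∨ S e :=
  (hR.not.imp hS).of_iff fun _ => or_iff_not_imp_left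

theorem Delta0Rel.bex {R : (Option ι → ℕ) → Prop} (hf : PolyFun f) (hR : Delta0Rel R) :
    Delta0Rel fun e => ∃ x < f e, R (Option.elim' x e) :=
  (Delta0Rel.ball hf hR.not).not.of_iff fun _ => by simp only [not_forall, not_not, exists_prop]

end Delta0Rel

theorem natRec_eq_iff_exists_beta {b : ℕ} {G : ℕ → ℕ → ℕ} {n c : ℕ} :
    Nat.rec b G n = c ↔ ∃ s, Nat.beta s 0 = b ∧
      (∀ y < n, Nat.beta s (y + 1) = G y (Nat.beta s y)) ∧ Nat.beta s n = c := by
  constructor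
  · rintro rfl
    let l := (List.range (n + 1)).map fun y => (Nat.rec b G y : ℕ)
    have beta_eq {y : ℕ} (hy : y ≤ n) : (Nat.unbeta l).beta y = Nat.rec b G y := by
      have := Nat.beta_unbeta_coe l ⟨y, by simpa [l, Nat.lt_succ_iff] using hy⟩
      simpa [l] using this
    refine ⟨Nat.unbeta l, beta_eq n.zero_le, fun y hy => ?_, beta_eq le_rfl⟩
    rw [beta_eq hy, beta_eq hy.le]
  · rintro ⟨s, h0, hsucc, rfl⟩
    suffices ∀ y ≤ n, Nat.rec b G y = Nat.beta s y from this n le_rfl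
    intro y hy
    induction y with
    | zero => exact h0.symm
    | succ y ih => rw [hsucc y hy, ← ih (Nat.le_of_succ_le hy)]

section Sigma1Rel

variable {ι κ : Type} {R S : (ι → ℕ) → Prop} {f g h : (ι → ℕ) → ℕ}

theorem Delta0Rel.sigma1Rel (hR : Delta0Rel R) : Sigma1Rel R :=
  ⟨_, hR.rename some, fun _ => by simp⟩

namespace Sigma1Rel

theorem of_iff (hR : Sigma1Rel R) (h : ∀ e, S e ↔ R e) : Sigma1Rel S := by
  rwa [show S = R from funext fun e => propext (h e)]

theorem rename (hR : Sigma1Rel R) (ρ : ι → κ) : Sigma1Rel fun e => R fun i => e (ρ i) := by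
  obtain ⟨Q, hQ, hRQ⟩ := hR
  exact ⟨_, hQ.rename (Option.map ρ), fun e => by simp only [hRQ, elim'_comp_option_map]⟩

theorem and (hR : Sigma1Rel R) (hS : Sigma1Rel S) : Sigma1Rel fun e => R e ∧ S e := by
  obtain ⟨Q, hQ, hRQ⟩ := hR
  obtain ⟨T, hT, hST⟩ := hS
  refine ⟨_, ((hQ.rename (Option.map some)).bex (.var none)).and
    ((hT.rename (Option.map some)).bex (.var none)), fun e => ?_⟩
  simp only [hRQ, hST, elim'_comp_option_map, Option.elim'_none, Option.elim'_some]
  exact ⟨fun ⟨⟨y, hy⟩, z, hz⟩ => ⟨y + z + 1, ⟨y, by omega, hy⟩, z, by omega, hz⟩,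
    fun ⟨_, ⟨y, _, hy⟩, z, _, hz⟩ => ⟨⟨y, hy⟩, z, hz⟩⟩

theorem exists_nat {R : ℕ → (ι → ℕ) → Prop}
    (hR : Sigma1Rel fun e : Option ι → ℕ => R (e none) fun i => e (some i)) :
    Sigma1Rel fun e => ∃ x, R x e := by
  obtain ⟨Q, hQ, hRQ⟩ := hR
  refine ⟨_, ((hQ.rename (Option.map (Option.map some))).bex (.var (some none))).bex (.var none),
    fun e => ?_⟩
  have hRQ (x : ℕ) : R x e ↔ ∃ y, Q (Option.elim' y (Option.elim' x e)) := hRQ (Option.elim' x e)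
  simp only [hRQ, elim'_comp_option_map, Option.elim'_none, Option.elim'_some]
  exact ⟨fun ⟨x, y, hy⟩ => ⟨x + y + 1, x, by omega, y, by omega, hy⟩,
    fun ⟨_, x, _, y, _, hy⟩ => ⟨x, y, hy⟩⟩

private theorem forall_lt_polyFun {R : ℕ → (ι → ℕ) → Prop} (hf : PolyFun f)
    (hR : Sigma1Rel fun e : Option ι → ℕ => R (e none) fun i => e (some i)) :
    Sigma1Rel fun e => ∀ x < f e, R x e := by
  obtain ⟨Q, hQ, hRQ⟩ := hR
  refine ⟨_, ((hQ.rename (Option.map (Option.map some))).bex (.var (some none))).ball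
    (hf.rename some), fun e => ?_⟩
  have hRQ (x : ℕ) : R x e ↔ ∃ y, Q (Option.elim' y (Option.elim' x e)) := hRQ (Option.elim' x e)
  simp only [hRQ, elim'_comp_option_map, Option.elim'_none, Option.elim'_some]
  exact forall_lt_exists_iff

theorem subst {R : ℕ → (ι → ℕ) → Prop}
    (hR : Sigma1Rel fun e : Option ι → ℕ => R (e none) fun i => e (some i)) (hf : Sigma1Fun f) :
    Sigma1Rel fun e => R (f e) e :=
  (exists_nat (R := fun x e => f e = x ∧ R x e) (hf.and hR)).of_iff fun _ => by simp

theorem forall_lt {R : ℕ → (ι → ℕ) → Prop} (hf : Sigma1Fun f)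
    (hR : Sigma1Rel fun e : Option ι → ℕ => R (e none) fun i => e (some i)) :
    Sigma1Rel fun e => ∀ x < f e, R x e :=
  subst (R := fun b e => ∀ x < b, R x e)
    (forall_lt_polyFun (.var none) (hR.rename (Option.map some))) hf

end Sigma1Rel

namespace Sigma1Fun

theorem rename (hf : Sigma1Fun f) (ρ : ι → κ) : Sigma1Fun fun e => f fun i => e (ρ i) :=
  Sigma1Rel.rename hf (Option.map ρ)

theorem of_polyFun (hf : PolyFun f) : Sigma1Fun f :=
  (Delta0Rel.eq (hf.rename some) (.var none)).sigma1Rel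

theorem var (i : ι) : Sigma1Fun fun e => e i :=
  of_polyFun (.var i)

theorem eq (hf : Sigma1Fun f) (hg : Sigma1Fun g) : Sigma1Rel fun e => f e = g e :=
  (Sigma1Rel.subst (R := fun x e => g e = x) hg hf).of_iff fun _ => eq_comm

theorem comp₂ {F : ℕ → ℕ → ℕ} (hf : Sigma1Fun f) (hg : Sigma1Fun g)
    (hF : Delta0Rel fun e : Option (Option Unit) → ℕ =>
      F (e (some (some ()))) (e (some none)) = e none) :
    Sigma1Fun fun e => F (f e) (g e) := by
  refine Sigma1Rel.subst (R := fun x e => F x (g fun i => e (some i)) = e none) ?_ (hf.rename some)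
  refine Sigma1Rel.subst (R := fun y e => F (e none) y = e (some none)) ?_
    (hg.rename fun i => some (some i))
  exact (hF.rename fun o =>
    o.elim (some (some none)) fun o => o.elim none fun _ => some none).sigma1Rel

theorem add (hf : Sigma1Fun f) (hg : Sigma1Fun g) : Sigma1Fun fun e => f e + g e :=
  hf.comp₂ hg (.eq (.add (.var _) (.var _)) (.var _))

theorem mul (hf : Sigma1Fun f) (hg : Sigma1Fun g) : Sigma1Fun fun e => f e * g e :=
  hf.comp₂ hg (.eq (.mul (.var _) (.var _)) (.var _))

theorem succ (hf : Sigma1Fun f) : Sigma1Fun fun e => f e + 1 :=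
  hf.add (of_polyFun .one)

theorem mod_succ (hf : Sigma1Fun f) (hg : Sigma1Fun g) : Sigma1Fun fun e => f e % (g e + 1) := by
  refine hf.comp₂ (F := fun x y => x % (y + 1)) hg ?_
  refine ((Delta0Rel.lt (.var none) (.add (.var (some none)) .one)).and
    ((Delta0Rel.eq (.var (some (some (some ())))) (.add (.mul (.add (.var (some (some none))) .one)
      (.var none)) (.var (some none)))).bex (.add (.var (some (some ()))) .one))).of_iff fun e => ?_
  simp only [Option.elim'_none, Option.elim'_some]
  constructor
  · intro h
    rw [← h]
    exact ⟨Nat.mod_lt _ (Nat.succ_pos _), _,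
      Nat.lt_succ_of_le (Nat.div_le_self _ (e (some none) + 1)), (Nat.div_add_mod _ _).symm⟩
  · rintro ⟨hlt, q, -, h⟩
    rw [h, Nat.mul_add_mod, Nat.mod_eq_of_lt hlt]

theorem natPair (hf : Sigma1Fun f) (hg : Sigma1Fun g) :
    Sigma1Fun fun e => Nat.pair (f e) (g e) := by
  let a : PolyFun fun e : Option (Option Unit) → ℕ => e (some (some ())) := .var _
  let b : PolyFun fun e : Option (Option Unit) → ℕ => e (some none) := .var _
  refine hf.comp₂ hg ((((Delta0Rel.lt a b).and (.eq (.add (.mul b b) a) (.var none))).or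
    ((Delta0Rel.lt a b).not.and (.eq (.add (.add (.mul a a) a) b) (.var none)))).of_iff fun e => ?_)
  unfold Nat.pair
  split_ifs with h <;> simp [h]

theorem unpair_fst (hf : Sigma1Fun f) : Sigma1Fun fun e => (f e).unpair.1 := by
  refine (Sigma1Rel.exists_nat (R := fun z e => Nat.pair (e none) z = f fun i => e (some i))
    (((var (some none)).natPair (var none)).eq (hf.rename fun i => some (some i)))).of_iff
    fun e => ?_
  constructor
  · exact fun h => ⟨_, by rw [← h, Nat.pair_unpair]⟩
  · rintro ⟨z, hz⟩
    simp only [← hz, Nat.unpair_pair]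

theorem unpair_snd (hf : Sigma1Fun f) : Sigma1Fun fun e => (f e).unpair.2 := by
  refine (Sigma1Rel.exists_nat (R := fun z e => Nat.pair z (e none) = f fun i => e (some i))
    (((var none).natPair (var (some none))).eq (hf.rename fun i => some (some i)))).of_iff
    fun e => ?_
  constructor
  · exact fun h => ⟨_, by rw [← h, Nat.pair_unpair]⟩
  · rintro ⟨z, hz⟩
    simp only [← hz, Nat.unpair_pair]

theorem natBeta (hf : Sigma1Fun f) (hg : Sigma1Fun g) :
    Sigma1Fun fun e => Nat.beta (f e) (g e) :=
  hf.unpair_fst.mod_succ (hg.succ.mul hf.unpair_snd)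

theorem natRec {n b : (ι → ℕ) → ℕ} {G : ℕ → ℕ → (ι → ℕ) → ℕ} (hn : Sigma1Fun n)
    (hb : Sigma1Fun b) (hG : Sigma1Fun fun e : Option (Option ι) → ℕ =>
      G (e (some none)) (e none) fun i => e (some (some i))) :
    Sigma1Fun fun e => Nat.rec (b e) (fun y ih => G y ih e) (n e) := by
  have base : Sigma1Rel fun e : Option (Option ι) → ℕ =>
      Nat.beta (e none) 0 = b fun i => e (some (some i)) :=
    ((var none).natBeta (of_polyFun .zero)).eq (hb.rename fun i => some (some i))
  have step : Sigma1Rel fun e : Option (Option ι) → ℕ => ∀ y < n fun i => e (some (some i)),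
      Nat.beta (e none) (y + 1) = G y (Nat.beta (e none) y) fun i => e (some (some i)) :=
    .forall_lt (hn.rename fun i => some (some i))
      (.subst (R := fun x (e : Option (Option (Option ι)) → ℕ) => Nat.beta (e (some none))
          (e none + 1) = G (e none) x fun i => e (some (some (some i))))
        (((var (some (some none))).natBeta (var (some none)).succ).eq
          (hG.rename fun o => o.elim none fun o => o.elim (some none) fun i =>
            some (some (some (some i)))))
        ((var (some none)).natBeta (var none)))
  have value : Sigma1Rel fun e : Option (Option ι) → ℕ =>
      Nat.beta (e none) (n fun i => e (some (some i))) = e (some none) :=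
    ((var none).natBeta (hn.rename fun i => some (some i))).eq (var (some none))
  exact (Sigma1Rel.exists_nat (base.and (step.and value))).of_iff fun _ =>
    natRec_eq_iff_exists_beta

theorem comp_natPrimrec {F : ℕ → ℕ} (hF : Nat.Primrec F) (hf : Sigma1Fun f) :
    Sigma1Fun fun e => F (f e) := by
  induction hF generalizing ι with
  | zero => exact of_polyFun .zero
  | succ => exact hf.succ
  | left => exact hf.unpair_fst
  | right => exact hf.unpair_snd
  | pair _ _ ihF ihG => exact (ihF hf).natPair (ihG hf)
  | comp _ _ ihF ihG => exact ihF (ihG hf)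
  | prec _ _ ihF ihG =>
    exact natRec hf.unpair_snd (ihF hf.unpair_fst)
      (ihG ((hf.unpair_fst.rename fun i => some (some i)).natPair
        ((var (some none)).natPair (var none))))

theorem sigma1Rel_of_primrecPred {γ : Type*} [Primcodable γ] {P : γ → Prop} {d : (ι → ℕ) → γ}
    (hd : Sigma1Fun fun e => Encodable.encode (d e)) (hP : PrimrecPred P) :
    Sigma1Rel fun e => P (d e) := by
  obtain ⟨_, hP⟩ := hP
  have const (n : ℕ) : Sigma1Fun fun _ : ι → ℕ => n :=
    comp_natPrimrec (.const n) (of_polyFun .zero)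
  refine ((comp_natPrimrec hP hd).eq (const (Encodable.encode (some true)))).of_iff fun e => ?_
  simp only [Encodable.encodek, Option.map_some, Encodable.encode_inj, Option.some_inj,
    decide_eq_true_eq]

end Sigma1Fun
end Sigma1Rel

/-! ### Definability in the standard model -/

section Realize

variable {α M : Type} {l : ℕ}

theorem sumElim_snoc_map_castSucc (v : α → M) (xs : Fin l → M) (y : M) (s : α ⊕ Fin l) :
    Sum.elim v (Fin.snoc xs y : Fin (l + 1) → M) (Sum.map id Fin.castSucc s) =
      Sum.elim v xs s := by
  cases s with
  | inl a => rfl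
  | inr i => exact Fin.snoc_castSucc (α := fun _ => M) y xs i

variable [lang.Structure M]

theorem realize_liftAt_one (t : lang.Term (α ⊕ Fin l)) (v : α → M) (xs : Fin l → M) (y : M) :
    (t.liftAt 1 l).realize (Sum.elim v (Fin.snoc xs y : Fin (l + 1) → M)) =
      t.realize (Sum.elim v xs) := by
  rw [Term.realize_liftAt]
  congr 1
  funext s
  rw [← sumElim_snoc_map_castSucc v xs y s]
  cases s <;> simp [Fin.castAdd, Fin.castSucc]

theorem realize_ltFm (t u : lang.Term (α ⊕ Fin l)) (v : α → M) (xs : Fin l → M) :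
    (ltFm t u).Realize v xs ↔ t.realize (Sum.elim v xs) < u.realize (Sum.elim v xs) := by
  refine BoundedFormula.realize_rel.trans (iff_of_eq (congrArg (Structure.RelMap _) ?_))
  funext i
  fin_cases i <;> rfl

theorem realize_bdAll (t : lang.Term (α ⊕ Fin l)) (φ : lang.BoundedFormula α (l + 1)) (v : α → M)
    (xs : Fin l → M) :
    BoundedFormula.Realize
        (.all ((ltFm (Term.var (Sum.inr (Fin.last l))) (t.liftAt 1 l)).imp φ)) v xs ↔
      ∀ y, y < t.realize (Sum.elim v xs) → φ.Realize v (Fin.snoc xs y) := by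
  simp only [BoundedFormula.realize_all, BoundedFormula.realize_imp, realize_ltFm,
    realize_liftAt_one, Term.realize_var, Sum.elim_inr, Fin.snoc_last]

end Realize

/-- The standard model. It is not declared as an instance, since that would endow `ℕ` with a second
copy of its arithmetic. -/
@[reducible] def natStructure : lang.Structure ℕ where
  funMap := fun {_} f => match f with
    | Func.zero => fun _ => 0
    | Func.one => fun _ => 1
    | Func.add => fun v => v 0 + v 1
    | Func.mul => fun v => v 0 * v 1
  RelMap := fun {_} r => match r with
    | Rel.lt => fun v => v 0 < v 1

/-- The value of a term in the standard model. -/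
def evalNat {α : Type} (t : lang.Term α) (v : α → ℕ) : ℕ :=
  @Term.realize lang ℕ natStructure α v t

/-- Truth in the standard model. -/
def HoldsNat {α : Type} {l : ℕ} (φ : lang.BoundedFormula α l) (v : α → ℕ) (xs : Fin l → ℕ) :
    Prop :=
  @BoundedFormula.Realize lang ℕ natStructure α l φ v xs

section HoldsNat

variable {α ι : Type} {l m : ℕ} {v : α → ℕ} {xs : Fin l → ℕ}

theorem holdsNat_imp {φ ψ : lang.BoundedFormula α l} :
    HoldsNat (φ.imp ψ) v xs ↔ (HoldsNat φ v xs → HoldsNat ψ v xs) :=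
  Iff.rfl

theorem holdsNat_all {φ : lang.BoundedFormula α (l + 1)} :
    HoldsNat φ.all v xs ↔ ∀ y, HoldsNat φ v (Fin.snoc xs y) :=
  Iff.rfl

theorem holdsNat_ex {φ : lang.BoundedFormula α (l + 1)} :
    HoldsNat φ.ex v xs ↔ ∃ y, HoldsNat φ v (Fin.snoc xs y) :=
  @BoundedFormula.realize_ex lang ℕ natStructure _ _ _ _ _

theorem holdsNat_ltFm {t u : lang.Term (α ⊕ Fin l)} :
    HoldsNat (ltFm t u) v xs ↔ evalNat t (Sum.elim v xs) < evalNat u (Sum.elim v xs) :=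
  @realize_ltFm α ℕ l natStructure t u v xs

theorem holdsNat_bdAll {t : lang.Term (α ⊕ Fin l)} {φ : lang.BoundedFormula α (l + 1)} :
    HoldsNat (.all ((ltFm (Term.var (Sum.inr (Fin.last l))) (t.liftAt 1 l)).imp φ)) v xs ↔
      ∀ y < evalNat t (Sum.elim v xs), HoldsNat φ v (Fin.snoc xs y) :=
  @realize_bdAll α ℕ l natStructure t φ v xs

theorem PolyFun.exists_term {f : (ι → ℕ) → ℕ} (hf : PolyFun f) (ρ : ι → α) :
    ∃ t : lang.Term α, ∀ v, evalNat t v = f fun i => v (ρ i) := by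
  induction hf with
  | var i => exact ⟨Term.var (ρ i), fun _ => rfl⟩
  | zero => exact ⟨Term.func (Func.zero : lang.Functions 0) ![], fun _ => rfl⟩
  | one => exact ⟨Term.func (Func.one : lang.Functions 0) ![], fun _ => rfl⟩
  | add _ _ ihf ihg =>
    obtain ⟨t, ht⟩ := ihf
    obtain ⟨u, hu⟩ := ihg
    exact ⟨Term.func (Func.add : lang.Functions 2) ![t, u], fun v =>
      congrArg₂ (· + ·) (ht v) (hu v)⟩
  | mul _ _ ihf ihg =>
    obtain ⟨t, ht⟩ := ihf
    obtain ⟨u, hu⟩ := ihg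
    exact ⟨Term.func (Func.mul : lang.Functions 2) ![t, u], fun v =>
      congrArg₂ (· * ·) (ht v) (hu v)⟩

theorem sumElim_snoc_comp_elim (ρ : ι → α ⊕ Fin l) (v : α → ℕ) (xs : Fin l → ℕ) (y : ℕ) :
    (fun o => Sum.elim v (Fin.snoc xs y : Fin (l + 1) → ℕ)
      (Option.elim' (Sum.inr (Fin.last l)) (fun i => Sum.map id Fin.castSucc (ρ i)) o)) =
      Option.elim' y fun i => Sum.elim v xs (ρ i) := by
  funext o
  cases o with
  | none => simp
  | some i => exact sumElim_snoc_map_castSucc v xs y (ρ i)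

theorem Delta0Rel.exists_isDelta0 {R : (ι → ℕ) → Prop} (hR : Delta0Rel R) (ρ : ι → α ⊕ Fin l) :
    ∃ φ : lang.BoundedFormula α l, IsDelta0 l φ ∧
      ∀ v xs, HoldsNat φ v xs ↔ R fun i => Sum.elim v xs (ρ i) := by
  induction hR generalizing l with
  | false => exact ⟨_, .falsum l, fun _ _ => Iff.rfl⟩
  | eq hf hg =>
    obtain ⟨t, ht⟩ := hf.exists_term ρ
    obtain ⟨u, hu⟩ := hg.exists_term ρ
    refine ⟨_, .equal l t u, fun v xs => ?_⟩
    simp only [← ht, ← hu]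
    rfl
  | lt hf hg =>
    obtain ⟨t, ht⟩ := hf.exists_term ρ
    obtain ⟨u, hu⟩ := hg.exists_term ρ
    refine ⟨ltFm t u, .rel l 2 _ _, fun v xs => ?_⟩
    simp only [← ht, ← hu, holdsNat_ltFm]
  | imp _ _ ihR ihS =>
    obtain ⟨φ, hφ, φ_iff⟩ := ihR ρ
    obtain ⟨ψ, hψ, ψ_iff⟩ := ihS ρ
    exact ⟨_, .imp l hφ hψ, fun v xs => by rw [holdsNat_imp, φ_iff, ψ_iff]⟩
  | ball hf _ ih =>
    obtain ⟨t, ht⟩ := hf.exists_term ρ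
    obtain ⟨φ, hφ, φ_iff⟩ :=
      ih (Option.elim' (Sum.inr (Fin.last l)) fun i => Sum.map id Fin.castSucc (ρ i))
    refine ⟨_, .bdAll l t hφ, fun v xs => ?_⟩
    simp only [holdsNat_bdAll, ht, φ_iff, sumElim_snoc_comp_elim]

theorem Sigma1Rel.exists_isDelta0 {R : (α ⊕ Fin l → ℕ) → Prop} (hR : Sigma1Rel R) :
    ∃ φ : lang.BoundedFormula α (l + 1), IsDelta0 (l + 1) φ ∧
      ∀ v xs, R (Sum.elim v xs) ↔ ∃ y, HoldsNat φ v (Fin.snoc xs y) := by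
  obtain ⟨Q, hQ, hRQ⟩ := hR
  obtain ⟨φ, hφ, φ_iff⟩ :=
    hQ.exists_isDelta0 (Option.elim' (Sum.inr (Fin.last l)) (Sum.map id Fin.castSucc))
  refine ⟨φ, hφ, fun v xs => ?_⟩
  simp only [hRQ, φ_iff, sumElim_snoc_comp_elim fun i => i]

theorem SigmaPred.exists_sigmaFm_and_exists_piFm {γ : Type*} [Primcodable γ] {P : γ → Prop}
    (hP : SigmaPred (m + 1) P) {d : (α ⊕ Fin l → ℕ) → γ}
    (hd : Sigma1Fun fun e => Encodable.encode (d e)) :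
    (∃ σ : lang.BoundedFormula α l, SigmaFm (m + 1) l σ ∧
      ∀ v xs, HoldsNat σ v xs ↔ P (d (Sum.elim v xs))) ∧
    ∃ π : lang.BoundedFormula α l, PiFm (m + 1) l π ∧
      ∀ v xs, HoldsNat π v xs ↔ ¬P (d (Sum.elim v xs)) := by
  induction m generalizing γ l with
  | zero =>
    obtain ⟨Q, hQ, hPQ⟩ := hP
    have hR : Sigma1Rel fun e => ∃ y, ¬Q (d e, y) :=
      Sigma1Rel.exists_nat (((hd.rename some).natPair (.var none)).sigma1Rel_of_primrecPred
        (d := fun e => (d fun i => e (some i), e none)) (PrimrecPred.not hQ))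
    obtain ⟨φ, hφ, φ_iff⟩ := (hR.of_iff fun e => hPQ (d e)).exists_isDelta0
    refine ⟨⟨φ.ex, .ex _ _ (.delta0 _ _ hφ), fun v xs => ?_⟩, (φ.imp .falsum).all,
      .all _ _ (.delta0 _ _ (.imp _ hφ (.falsum _))), fun v xs => ?_⟩
    · rw [holdsNat_ex, φ_iff]
    · rw [φ_iff, not_exists]
      rfl
  | succ m ih =>
    obtain ⟨Q, hQ, hPQ⟩ := hP
    let d' (e : α ⊕ Fin (l + 1) → ℕ) : γ × ℕ :=
      (d fun s => e (Sum.map id Fin.castSucc s), e (Sum.inr (Fin.last l)))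
    have d'_snoc (v xs y) :
        d' (Sum.elim v (Fin.snoc xs y : Fin (l + 1) → ℕ)) = (d (Sum.elim v xs), y) := by
      simp only [d', sumElim_snoc_map_castSucc, Sum.elim_inr, Fin.snoc_last]
    obtain ⟨⟨σ, hσ, σ_iff⟩, π, hπ, π_iff⟩ :=
      ih hQ (d := d') ((hd.rename (Sum.map id Fin.castSucc)).natPair (.var (Sum.inr (Fin.last l))))
    refine ⟨⟨π.ex, .ex _ _ (.ofPi _ _ hπ), fun v xs => ?_⟩, σ.all,
      .all _ _ (.ofSigma _ _ hσ), fun v xs => ?_⟩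
    · simp only [holdsNat_ex, π_iff, d'_snoc, hPQ]
    · simp only [holdsNat_all, σ_iff, d'_snoc, hPQ, not_exists, not_not]

end HoldsNat

section Hierarchy

variable {α γ : Type} [Primcodable γ] {l : ℕ}

theorem snoc_apply {M β : Type} (xs : Fin l → β → M) (y : β → M) (x : β) :
    (fun j => (Fin.snoc xs y : Fin (l + 1) → β → M) j x) =
      (Fin.snoc (fun j => xs j x) (y x) : Fin (l + 1) → M) :=
  Fin.comp_snoc (fun f : β → M => f x) xs y

theorem forall_snoc {M : Type} {p : M → Prop} {xs : Fin l → M} {y : M} (hxs : ∀ j, p (xs j))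
    (hy : p y) (j : Fin (l + 1)) : p ((Fin.snoc xs y : Fin (l + 1) → M) j) := by
  refine Fin.lastCases ?_ (fun j => ?_) j
  · rwa [Fin.snoc_last]
  · rw [Fin.snoc_castSucc]
    exact hxs j

theorem primrec_evalNat {β : Type} (t : lang.Term β) {v : β → γ → ℕ} (hv : ∀ b, Primrec (v b)) :
    Primrec fun x => evalNat t fun b => v b x := by
  induction t with
  | var b => exact hv b
  | func f ts ih =>
    cases f with
    | zero => exact .const 0
    | one => exact .const 1
    | add => exact Primrec.nat_add.comp (ih 0) (ih 1)
    | mul => exact Primrec.nat_mul.comp (ih 0) (ih 1)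

theorem sumElim_apply {M β : Type} (v : α → β → M) (xs : Fin l → β → M) (x : β) :
    (fun s => Sum.elim v xs s x) = Sum.elim (fun a => v a x) fun j => xs j x :=
  funext fun s => by cases s <;> rfl

theorem IsDelta0.primrecPred {φ : lang.BoundedFormula α l} (hφ : IsDelta0 l φ) {v : α → γ → ℕ}
    {xs : Fin l → γ → ℕ} (hv : ∀ a, Primrec (v a)) (hxs : ∀ j, Primrec (xs j)) :
    PrimrecPred fun x => HoldsNat φ (fun a => v a x) fun j => xs j x := by
  have eval {l : ℕ} {γ : Type} [Primcodable γ] {v : α → γ → ℕ} {xs : Fin l → γ → ℕ}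
      (t : lang.Term (α ⊕ Fin l)) (hv : ∀ a, Primrec (v a)) (hxs : ∀ j, Primrec (xs j)) :
      Primrec fun x => evalNat t (Sum.elim (fun a => v a x) fun j => xs j x) := by
    simpa only [sumElim_apply] using primrec_evalNat t (v := Sum.elim v xs) (Sum.rec hv hxs)
  induction hφ generalizing γ with
  | falsum =>
    exact (Primrec.eq.comp (.const 0) (.const 1)).of_eq fun _ => iff_of_false zero_ne_one id
  | equal l t u => exact Primrec.eq.comp (eval t hv hxs) (eval u hv hxs)
  | rel l k R ts =>
    cases R
    exact Primrec.nat_lt.comp (eval (ts 0) hv hxs) (eval (ts 1) hv hxs)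
  | imp l _ _ ihφ ihψ =>
    exact ((ihφ hv hxs).not.or (ihψ hv hxs)).of_eq fun _ => imp_iff_not_or.symm
  | bdAll l t _ ih =>
    have matrix := ih (γ := γ × ℕ) (fun a => (hv a).comp .fst)
      (forall_snoc (fun j => (hxs j).comp .fst) .snd)
    have hP : SigmaPred 0 _ := matrix
    exact (PrimrecPred.comp hP.forall_lt (Primrec.id.pair (eval t hv hxs))).of_eq fun x => by
      simp only [id, snoc_apply, holdsNat_bdAll]

mutual

theorem SigmaFm.sigmaPred {l m : ℕ} {φ : lang.BoundedFormula α l} (hφ : SigmaFm m l φ)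
    {γ : Type} [Primcodable γ] {v : α → γ → ℕ} {xs : Fin l → γ → ℕ} (hv : ∀ a, Primrec (v a))
    (hxs : ∀ j, Primrec (xs j)) :
    SigmaPred m fun x => HoldsNat φ (fun a => v a x) fun j => xs j x := by
  match hφ with
  | .delta0 _ _ hφ => exact .of_primrecPred (hφ.primrecPred hv hxs)
  | .ofPi _ _ hφ => exact (hφ.sigmaPred_not hv hxs).not.of_iff fun _ => not_not.symm
  | .ex _ _ hφ =>
    have matrix := hφ.sigmaPred (γ := γ × ℕ) (fun a => (hv a).comp .fst)
      (forall_snoc (fun j => (hxs j).comp .fst) .snd)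
    exact matrix.exists_nat.of_iff fun x => by simp only [snoc_apply, holdsNat_ex]

theorem PiFm.sigmaPred_not {l m : ℕ} {φ : lang.BoundedFormula α l} (hφ : PiFm m l φ)
    {γ : Type} [Primcodable γ] {v : α → γ → ℕ} {xs : Fin l → γ → ℕ} (hv : ∀ a, Primrec (v a))
    (hxs : ∀ j, Primrec (xs j)) :
    SigmaPred m fun x => ¬HoldsNat φ (fun a => v a x) fun j => xs j x := by
  match hφ with
  | .delta0 _ _ hφ => exact .of_primrecPred (hφ.primrecPred hv hxs).not
  | .ofSigma _ _ hφ => exact (hφ.sigmaPred hv hxs).not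
  | .all _ _ hφ =>
    have matrix :=
      hφ.sigmaPred_not (γ := γ × ℕ) (fun a => (hv a).comp .fst)
        (forall_snoc (fun j => (hxs j).comp .fst) .snd)
    exact matrix.exists_nat.of_iff fun x => by simp only [snoc_apply, holdsNat_all, not_forall]

end

variable {m n : ℕ} {v : α → γ → ℕ} {xs : Fin l → γ → ℕ}

theorem SigmaPred.comp_coordinates {q : ℕ} (index : α ≃ Fin q) {P : (α → ℕ) → (Fin l → ℕ) → Prop}
    (hP : SigmaPred (n + 1) fun p : (Fin q → ℕ) × (Fin l → ℕ) => P (fun a => p.1 (index a)) p.2)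
    (hv : ∀ a, SigmaFun (n + 1) (v a)) (hxs : ∀ j, SigmaFun (n + 1) (xs j)) :
    SigmaPred (n + 1) fun x => P (fun a => v a x) fun j => xs j x :=
  (hP.comp_sigmaFun ((SigmaFun.pi_fin fun j => hv (index.symm j)).pair
    (.pi_fin hxs))).of_iff fun x => by simp only [Equiv.symm_apply_apply]

theorem SigmaFm.sigmaPred_comp_sigmaFun [Finite α] {φ : lang.BoundedFormula α l}
    (hφ : SigmaFm m l φ) (hm : m ≤ n + 1) (hv : ∀ a, SigmaFun (n + 1) (v a))
    (hxs : ∀ j, SigmaFun (n + 1) (xs j)) :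
    SigmaPred (n + 1) fun x => HoldsNat φ (fun a => v a x) fun j => xs j x := by
  obtain ⟨_, ⟨index⟩⟩ := Finite.exists_equiv_fin α
  exact .comp_coordinates index ((hφ.sigmaPred (fun _ => Primrec.fin_app.comp .fst (.const _))
    fun _ => Primrec.fin_app.comp .snd (.const _)).mono hm) hv hxs

theorem PiFm.sigmaPred_not_comp_sigmaFun [Finite α] {φ : lang.BoundedFormula α l}
    (hφ : PiFm m l φ) (hm : m ≤ n + 1) (hv : ∀ a, SigmaFun (n + 1) (v a))
    (hxs : ∀ j, SigmaFun (n + 1) (xs j)) :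
    SigmaPred (n + 1) fun x => ¬HoldsNat φ (fun a => v a x) fun j => xs j x := by
  obtain ⟨_, ⟨index⟩⟩ := Finite.exists_equiv_fin α
  exact .comp_coordinates (P := fun v xs => ¬HoldsNat φ v xs) index
    ((hφ.sigmaPred_not (fun _ => Primrec.fin_app.comp .fst (.const _))
      fun _ => Primrec.fin_app.comp .snd (.const _)).mono hm) hv hxs

theorem SigmaFm.sigmaPred_snoc [Finite α] {φ : lang.BoundedFormula α (l + 1)}
    (hφ : SigmaFm m (l + 1) φ) (hm : m ≤ n + 1) (hv : ∀ a, SigmaFun (n + 1) (v a))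
    (hxs : ∀ j, SigmaFun (n + 1) (xs j)) : SigmaPred (n + 1) fun p : γ × ℕ =>
      HoldsNat φ (fun a => v a p.1) (Fin.snoc (fun j => xs j p.1) p.2) := by
  simpa only [snoc_apply] using hφ.sigmaPred_comp_sigmaFun hm
    (fun a => (hv a).comp_primrec Primrec.fst)
    (forall_snoc (fun j => (hxs j).comp_primrec .fst) (.of_primrec .snd))

theorem PiFm.sigmaPred_not_snoc [Finite α] {φ : lang.BoundedFormula α (l + 1)}
    (hφ : PiFm m (l + 1) φ) (hm : m ≤ n + 1) (hv : ∀ a, SigmaFun (n + 1) (v a))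
    (hxs : ∀ j, SigmaFun (n + 1) (xs j)) : SigmaPred (n + 1) fun p : γ × ℕ =>
      ¬HoldsNat φ (fun a => v a p.1) (Fin.snoc (fun j => xs j p.1) p.2) := by
  simpa only [snoc_apply] using hφ.sigmaPred_not_comp_sigmaFun hm
    (fun a => (hv a).comp_primrec Primrec.fst)
    (forall_snoc (fun j => (hxs j).comp_primrec .fst) (.of_primrec .snd))

end Hierarchy

/-! ### The ultrapower by definable functions -/

section Ultrapower

open Filter

/-- The functions on `ℕ` with a Σ_{n+1} graph. -/
abbrev DefFun (n : ℕ) : Type :=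
  {f : ℕ → ℕ // SigmaFun (n + 1) f}

/-- The ultrapower of the standard model by the functions with a Σ_{n+1} graph, realized as the
germs along `U` of such functions. -/
def DefUltrapower (U : Ultrafilter ℕ) (n : ℕ) : Type :=
  {x : Germ (U : Filter ℕ) ℕ // ∃ f : ℕ → ℕ, SigmaFun (n + 1) f ∧ (f : Germ (U : Filter ℕ) ℕ) = x}

namespace DefUltrapower

variable {U : Ultrafilter ℕ} {n : ℕ}

/-- The element represented by a function with a Σ_{n+1} graph. -/
def ofFun (f : DefFun n) : DefUltrapower U n :=
  ⟨f.1, f.1, f.2, rfl⟩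

theorem ofFun_surjective : Function.Surjective (ofFun : _ → DefUltrapower U n) := by
  rintro ⟨_, f, hf, rfl⟩
  exact ⟨⟨f, hf⟩, rfl⟩

instance : lang.Structure (DefUltrapower U n) where
  funMap := fun {_} f => match f with
    | Func.zero => fun _ => ⟨0, _, .of_primrec (.const 0), rfl⟩
    | Func.one => fun _ => ⟨1, _, .of_primrec (.const 1), rfl⟩
    | Func.add => fun v => ⟨(v 0).1 + (v 1).1, by
        obtain ⟨f, hf, hfv⟩ := (v 0).2
        obtain ⟨g, hg, hgv⟩ := (v 1).2
        exact ⟨_, hf.comp₂ Primrec.nat_add hg, by rw [← hfv, ← hgv]; rfl⟩⟩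
    | Func.mul => fun v => ⟨(v 0).1 * (v 1).1, by
        obtain ⟨f, hf, hfv⟩ := (v 0).2
        obtain ⟨g, hg, hgv⟩ := (v 1).2
        exact ⟨_, hf.comp₂ Primrec.nat_mul hg, by rw [← hfv, ← hgv]; rfl⟩⟩
  RelMap := fun {_} r => match r with
    | Rel.lt => fun v => (v 0).1 < (v 1).1

theorem ofFun_eq_ofFun {f g : DefFun n} :
    (ofFun f : DefUltrapower U n) = ofFun g ↔ ∀ᶠ i in U, f.1 i = g.1 i :=
  Subtype.ext_iff.trans Germ.coe_eq

theorem ofFun_lt_ofFun {f g : DefFun n} :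
    (ofFun f : DefUltrapower U n) < ofFun g ↔ ∀ᶠ i in U, f.1 i < g.1 i :=
  Germ.coe_lt

theorem le_iff (x y : DefUltrapower U n) : x ≤ y ↔ x.1 ≤ y.1 := by
  change x.1 < y.1 ∨ x = y ↔ x.1 ≤ y.1
  exact (or_congr_right Subtype.ext_iff).trans le_iff_lt_or_eq.symm

theorem pAm : PAm (DefUltrapower U n) where
  add_assoc x y z := Subtype.ext (add_assoc x.1 y.1 z.1)
  add_comm x y := Subtype.ext (add_comm x.1 y.1)
  mul_assoc x y z := Subtype.ext (mul_assoc x.1 y.1 z.1)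
  mul_comm x y := Subtype.ext (mul_comm x.1 y.1)
  ldistrib x y z := Subtype.ext (mul_add x.1 y.1 z.1)
  add_zero x := Subtype.ext (add_zero x.1)
  mul_zero x := Subtype.ext (mul_zero x.1)
  mul_one x := Subtype.ext (mul_one x.1)
  lt_trans x y z := lt_trans (a := x.1) (b := y.1) (c := z.1)
  lt_irrefl x := lt_irrefl x.1
  lt_total x y := (lt_trichotomy x.1 y.1).imp_right (.imp_left Subtype.ext)
  add_lt_add x y z h := add_lt_add_left (α := Germ (U : Filter ℕ) ℕ) h z.1
  mul_lt_mul x y z h hz := mul_lt_mul_of_pos_right (α := Germ (U : Filter ℕ) ℕ) h hz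
  sub_exists x y h := by
    obtain ⟨f, rfl⟩ := ofFun_surjective x
    obtain ⟨g, rfl⟩ := ofFun_surjective y
    refine ⟨ofFun ⟨fun i => g.1 i - f.1 i, g.2.comp₂ Primrec.nat_sub f.2⟩, Subtype.ext ?_⟩
    exact Germ.coe_eq.2 ((ofFun_lt_ofFun.1 h).mono fun i hi => Nat.add_sub_cancel' hi.le)
  zero_lt_one := zero_lt_one (α := Germ (U : Filter ℕ) ℕ)
  discrete x h := by
    obtain ⟨f, rfl⟩ := ofFun_surjective x
    exact (le_iff 1 (ofFun f)).2 (Germ.coe_le.2 (Germ.coe_lt.1 h))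
  zero_le x := (le_iff 0 x).2 (zero_le (a := x.1))

end DefUltrapower

open DefUltrapower

section Los

variable {U : Ultrafilter ℕ} {n : ℕ} {α : Type} {l m k : ℕ} {v : α → DefFun n}
  {xs : Fin l → DefFun n}

theorem realize_term_ofFun {β : Type} (t : lang.Term β) (v : β → DefFun n) :
    (t.realize fun b => (ofFun (v b) : DefUltrapower U n)).1 =
      ((fun i => evalNat t fun b => (v b).1 i : ℕ → ℕ) : Germ (U : Filter ℕ) ℕ) := by
  induction t with
  | var b => rfl
  | func f ts ih =>
    cases f with
    | zero => rfl
    | one => rfl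
    | add => exact congrArg₂ (· + ·) (ih 0) (ih 1)
    | mul => exact congrArg₂ (· * ·) (ih 0) (ih 1)

theorem realize_term_sumElim_ofFun (t : lang.Term (α ⊕ Fin l)) :
    (t.realize (Sum.elim (fun a => (ofFun (v a) : DefUltrapower U n)) fun j => ofFun (xs j))).1 =
      ((fun i => evalNat t (Sum.elim (fun a => (v a).1 i) fun j => (xs j).1 i) : ℕ → ℕ) :
        Germ (U : Filter ℕ) ℕ) := by
  have values (i : ℕ) : (fun s => (Sum.elim v xs s).1 i) =
      Sum.elim (fun a => (v a).1 i) fun j => (xs j).1 i :=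
    Sum.comp_elim (fun f : DefFun n => f.1 i) v xs
  simp only [← values]
  rw [← realize_term_ofFun]
  exact congrArg (fun w => (t.realize w : DefUltrapower U n).1) (Sum.comp_elim ofFun v xs).symm

/-- The truth of a formula in the ultrapower, at elements with representatives `v` and `xs`. -/
def HoldsUltra (U : Ultrafilter ℕ) (φ : lang.BoundedFormula α l) (v : α → DefFun n)
    (xs : Fin l → DefFun n) : Prop :=
  φ.Realize (fun a => (ofFun (v a) : DefUltrapower U n)) fun j => ofFun (xs j)

/-- The truth of a formula in the standard model, at the values of `v` and `xs` at `i`. -/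
def HoldsAt (i : ℕ) (φ : lang.BoundedFormula α l) (v : α → DefFun n) (xs : Fin l → DefFun n) :
    Prop :=
  HoldsNat φ (fun a => (v a).1 i) fun j => (xs j).1 i

theorem holdsUltra_all {φ : lang.BoundedFormula α (l + 1)} :
    HoldsUltra U φ.all v xs ↔ ∀ y, HoldsUltra U φ v (Fin.snoc xs y) := by
  simp only [HoldsUltra, BoundedFormula.realize_all, ofFun_surjective.forall]
  exact forall_congr' fun y => iff_of_eq (congrArg (φ.Realize _) (Fin.comp_snoc ofFun xs y).symm)

theorem holdsUltra_ex {φ : lang.BoundedFormula α (l + 1)} :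
    HoldsUltra U φ.ex v xs ↔ ∃ y, HoldsUltra U φ v (Fin.snoc xs y) := by
  simp only [HoldsUltra, BoundedFormula.realize_ex, ofFun_surjective.exists]
  exact exists_congr fun y => iff_of_eq (congrArg (φ.Realize _) (Fin.comp_snoc ofFun xs y).symm)

theorem holdsAt_snoc {φ : lang.BoundedFormula α (l + 1)} {y : DefFun n} {i : ℕ} :
    HoldsAt i φ v (Fin.snoc xs y) ↔
      HoldsNat φ (fun a => (v a).1 i) (Fin.snoc (fun j => (xs j).1 i) (y.1 i)) :=
  iff_of_eq (congrArg (HoldsNat φ _) (Fin.comp_snoc (fun f : DefFun n => f.1 i) xs y))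

/-- Łoś's theorem for the formula `φ`. -/
def IsLos (U : Ultrafilter ℕ) (n : ℕ) (φ : lang.BoundedFormula α l) : Prop :=
  ∀ (v : α → DefFun n) (xs : Fin l → DefFun n), HoldsUltra U φ v xs ↔ ∀ᶠ i in U, HoldsAt i φ v xs

theorem IsLos.imp {φ ψ : lang.BoundedFormula α l} (hφ : IsLos U n φ) (hψ : IsLos U n ψ) :
    IsLos U n (φ.imp ψ) := fun v xs =>
  (imp_congr (hφ v xs) (hψ v xs)).trans Ultrafilter.eventually_imp.symm

theorem IsLos.all [Finite α] {φ : lang.BoundedFormula α (l + 1)} (h : IsLos U n φ)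
    (hφ : PiFm m (l + 1) φ) (hm : m ≤ n + 1) (hall : SigmaFm k l φ.all) (hk : k ≤ n + 1) :
    IsLos U n φ.all := by
  intro v xs
  rw [holdsUltra_all]
  refine ⟨fun hM => by_contra fun hU => ?_, fun hU y => ?_⟩
  · obtain ⟨g, hg, g_counterexample⟩ := exists_sigmaFun_choice
      (D := fun i => ¬HoldsAt i φ.all v xs)
      (hφ.sigmaPred_not_snoc hm (fun a => (v a).2) fun j => (xs j).2)
      ((hall.sigmaPred_comp_sigmaFun hk (fun a => (v a).2) fun j => (xs j).2).of_iff
        fun _ => not_not) fun i hi => not_forall.1 hi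
    obtain ⟨i, hi, hi'⟩ :=
      ((Ultrafilter.eventually_not.2 hU).and ((h _ _).1 (hM ⟨g, hg⟩))).exists
    exact g_counterexample i hi (holdsAt_snoc.1 hi')
  · exact (h _ _).2 (hU.mono fun i hi => holdsAt_snoc.2 (hi _))

theorem exists_snoc_of_forall_mem [Finite α] {φ : lang.BoundedFormula α (l + 1)}
    (hφ : SigmaFm m (l + 1) φ) (hm : m ≤ n + 1) {D : ℕ → Prop}
    (hD : SigmaPred (n + 1) fun i => ¬D i) (h : ∀ i, D i → HoldsAt i φ.ex v xs) :
    ∃ y, ∀ i, D i → HoldsAt i φ v (Fin.snoc xs y) := by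
  obtain ⟨g, hg, g_witness⟩ := exists_sigmaFun_choice
    (hφ.sigmaPred_snoc hm (fun a => (v a).2) fun j => (xs j).2) hD
    fun i hi => holdsNat_ex.1 (h i hi)
  exact ⟨⟨g, hg⟩, fun i hi => holdsAt_snoc.2 (g_witness i hi)⟩

theorem IsLos.ex [Finite α] {φ : lang.BoundedFormula α (l + 1)} (h : IsLos U n φ)
    (hφ : SigmaFm m (l + 1) φ) (hm : m ≤ n + 1) (hex : PiFm k l φ.ex) (hk : k ≤ n + 1) :
    IsLos U n φ.ex := by
  intro v xs
  rw [holdsUltra_ex]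
  refine ⟨fun ⟨y, hy⟩ => ((h _ _).1 hy).mono fun i hi =>
    holdsNat_ex.2 ⟨_, holdsAt_snoc.1 hi⟩, fun hU => ?_⟩
  obtain ⟨y, hy⟩ := exists_snoc_of_forall_mem hφ hm
    (hex.sigmaPred_not_comp_sigmaFun hk (fun a => (v a).2) fun j => (xs j).2) fun _ => id
  exact ⟨y, (h _ _).2 (hU.mono hy)⟩

theorem isLos_rel {R : lang.Relations k} {ts : Fin k → lang.Term (α ⊕ Fin l)} :
    IsLos U n (BoundedFormula.rel R ts) := by
  cases R
  intro v xs
  have h₀ := realize_term_sumElim_ofFun (U := U) (v := v) (xs := xs) (ts 0)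
  have h₁ := realize_term_sumElim_ofFun (U := U) (v := v) (xs := xs) (ts 1)
  exact (iff_of_eq (congrArg₂ (· < ·) h₀ h₁)).trans Germ.coe_lt

theorem IsDelta0.isLos [Finite α] {φ : lang.BoundedFormula α l} (hφ : IsDelta0 l φ) :
    IsLos U n φ := by
  induction hφ with
  | falsum => exact fun v xs => iff_of_false id (eventually_false_iff_eq_bot.not.2 U.neBot.ne)
  | equal l t u =>
    intro v xs
    refine Subtype.ext_iff.trans ?_
    rw [realize_term_sumElim_ofFun, realize_term_sumElim_ofFun]
    exact Germ.coe_eq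
  | rel => exact isLos_rel
  | imp l _ _ ihφ ihψ => exact ihφ.imp ihψ
  | bdAll l t hφ ih =>
    exact (isLos_rel.imp ih).all (.delta0 0 _ (.imp _ (.rel _ _ _ _) hφ)) (Nat.zero_le _)
      (.delta0 0 l (.bdAll l t hφ)) (Nat.zero_le _)

mutual

theorem SigmaFm.isLos [Finite α] {l m : ℕ} {φ : lang.BoundedFormula α l} (hφ : SigmaFm m l φ)
    (hm : m ≤ n) : IsLos U n φ := by
  match hφ with
  | .delta0 _ _ hφ => exact hφ.isLos
  | .ofPi _ _ hφ => exact hφ.isLos ((Nat.le_succ _).trans hm)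
  | .ex _ _ hφ =>
    exact (hφ.isLos hm).ex hφ (hm.trans (Nat.le_succ n)) (.ofSigma _ _ (.ex _ _ hφ))
      (Nat.succ_le_succ hm)

theorem PiFm.isLos [Finite α] {l m : ℕ} {φ : lang.BoundedFormula α l} (hφ : PiFm m l φ)
    (hm : m ≤ n) : IsLos U n φ := by
  match hφ with
  | .delta0 _ _ hφ => exact hφ.isLos
  | .ofSigma _ _ hφ => exact hφ.isLos ((Nat.le_succ _).trans hm)
  | .all _ _ hφ =>
    exact (hφ.isLos hm).all hφ (hm.trans (Nat.le_succ n)) (.ofPi _ _ (.all _ _ hφ))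
      (Nat.succ_le_succ hm)

end

theorem SigmaFm.eventually_holdsAt [Finite α] {l : ℕ} {xs : Fin l → DefFun n}
    {φ : lang.BoundedFormula α l}
    (hφ : SigmaFm (n + 1) l φ) (h : HoldsUltra U φ v xs) : ∀ᶠ i in U, HoldsAt i φ v xs := by
  match hφ with
  | .delta0 _ _ hφ => exact (hφ.isLos v xs).1 h
  | .ofPi _ _ hφ => exact (hφ.isLos le_rfl v xs).1 h
  | .ex _ _ hφ =>
    obtain ⟨y, hy⟩ := holdsUltra_ex.1 h
    exact (hφ.eventually_holdsAt hy).mono fun i hi => holdsNat_ex.2 ⟨_, holdsAt_snoc.1 hi⟩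

theorem SigmaFm.holdsUltra_of_forall_mem [Finite α] {l : ℕ} {xs : Fin l → DefFun n}
    {φ : lang.BoundedFormula α l}
    (hφ : SigmaFm (n + 1) l φ) {D : ℕ → Prop} (hD : SigmaPred (n + 1) fun i => ¬D i)
    (hU : ∀ᶠ i in U, D i) (h : ∀ i, D i → HoldsAt i φ v xs) : HoldsUltra U φ v xs := by
  match hφ with
  | .delta0 _ _ hφ => exact (hφ.isLos v xs).2 (hU.mono h)
  | .ofPi _ _ hφ => exact (hφ.isLos le_rfl v xs).2 (hU.mono h)
  | .ex _ _ hφ =>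
    obtain ⟨y, hy⟩ := exists_snoc_of_forall_mem hφ le_rfl hD h
    exact holdsUltra_ex.2 ⟨y, hφ.holdsUltra_of_forall_mem hD hU hy⟩

end Los

section Model

variable {U : Ultrafilter ℕ} {n k : ℕ}

theorem realize_sumElim_ofFun {p : ℕ} {φ : lang.BoundedFormula (Fin k ⊕ Fin p) 0}
    (v : Fin k → DefFun n) (w : Fin p → DefFun n) :
    φ.Realize (Sum.elim (fun a => (ofFun (v a) : DefUltrapower U n)) fun b => ofFun (w b))
        finZeroElim ↔ HoldsUltra U φ (Sum.elim v w) finZeroElim :=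
  iff_of_eq (congrArg₂ φ.Realize (Sum.comp_elim ofFun v w).symm (Subsingleton.elim _ _))

theorem holdsAt_sumElim {p i : ℕ} {φ : lang.BoundedFormula (Fin k ⊕ Fin p) 0}
    (v : Fin k → DefFun n) (w : Fin p → DefFun n) :
    HoldsAt i φ (Sum.elim v w) finZeroElim ↔
      HoldsNat φ (Sum.elim (fun a => (v a).1 i) fun b => (w b).1 i) finZeroElim :=
  iff_of_eq (congrArg₂ (HoldsNat φ) (Sum.comp_elim (fun f : DefFun n => f.1 i) v w)
    (Subsingleton.elim _ _))

theorem SigmaDef1.exists_sigmaPred {A : Set (DefUltrapower U n)}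
    (hA : SigmaDef1 n (DefUltrapower U n) A) : ∃ P : ℕ × ℕ → Prop, SigmaPred (n + 1) P ∧
      (SigmaPred (n + 1) fun p => ¬P p) ∧ ∀ f, ofFun f ∈ A ↔ ∀ᶠ i in U, P (i, f.1 i) := by
  obtain ⟨p, φ, w, hφ, mem_iff⟩ := hA
  choose w' hw' using fun b => ofFun_surjective (w b)
  obtain rfl : (fun b => ofFun (w' b)) = w := funext hw'
  let coordinate : Fin 1 ⊕ Fin p → ℕ × ℕ → ℕ := Sum.elim (fun _ q => q.2) fun b q => (w' b).1 q.1
  have hcoordinate (b) : SigmaFun (n + 1) (coordinate b) :=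
    b.rec (fun _ => .of_primrec .snd) fun b => (w' b).2.comp_primrec .fst
  refine ⟨_, hφ.sigmaPred_comp_sigmaFun (Nat.le_succ n) hcoordinate (xs := finZeroElim) finZeroElim,
    (PiFm.ofSigma _ _ hφ).sigmaPred_not_comp_sigmaFun le_rfl hcoordinate finZeroElim, fun f => ?_⟩
  refine (mem_iff fun _ => ofFun f).trans <| (realize_sumElim_ofFun (fun _ => f) w').trans <|
    (hφ.isLos le_rfl _ _).trans <| eventually_congr <| .of_forall fun i =>
      (holdsAt_sumElim (fun _ => f) w').trans ?_
  refine iff_of_eq (congrArg₂ (HoldsNat φ) (funext fun b => ?_) (Subsingleton.elim _ _))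
  cases b <;> rfl

theorem DefUltrapower.iSig : ISig n (DefUltrapower U n) := by
  intro A hA zero_mem succ_mem x
  by_contra x_notMem
  obtain ⟨P, hP, not_P, mem_iff⟩ := hA.exists_sigmaPred
  obtain ⟨f, rfl⟩ := ofFun_surjective x
  obtain ⟨g, hg, g_last⟩ := exists_sigmaFun_and_not_succ hP not_P f.2
  have holds_zero : ∀ᶠ i in U, P (i, 0) := (mem_iff ⟨0, .of_primrec (.const 0)⟩).1 zero_mem
  have not_holds : ∀ᶠ i in U, ¬P (i, f.1 i) :=
    Ultrafilter.eventually_not.2 ((mem_iff f).not.1 x_notMem)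
  have last := (holds_zero.and not_holds).mono fun i h => g_last i h.1 h.2
  have succ_g_mem := succ_mem (ofFun ⟨g, hg⟩) ((mem_iff _).2 (last.mono fun _ => And.left))
  have holds_succ : ∀ᶠ i in U, P (i, g i + 1) :=
    (mem_iff ⟨fun i => g i + 1, hg.comp₂ Primrec.nat_add (.of_primrec (.const 1))⟩).1 succ_g_mem
  obtain ⟨i, h, h'⟩ := (last.and holds_succ).exists
  exact h.2 h'

theorem SigmaPred.exists_sigmaDef2 {H : (ℕ × ℕ) × ℕ → Prop} (hH : SigmaPred (n + 1) H) :
    ∃ F : DefUltrapower U n → DefUltrapower U n → Prop, SigmaDef2 (n + 1) _ F ∧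
      (∀ f g, F (ofFun f) (ofFun g) → ∀ᶠ i in U, H ((i, f.1 i), g.1 i)) ∧
      ∀ f g (D : ℕ → Prop), (SigmaPred (n + 1) fun i => ¬D i) → (∀ᶠ i in U, D i) →
        (∀ i, D i → H ((i, f.1 i), g.1 i)) → F (ofFun f) (ofFun g) := by
  let diagonal : DefFun n := ⟨id, .of_primrec .id⟩
  obtain ⟨⟨σ, hσ, σ_iff⟩, -⟩ := hH.exists_sigmaFm_and_exists_piFm (α := Fin 2 ⊕ Fin 1) (l := 0)
    (d := fun e => ((e (.inl (.inr 0)), e (.inl (.inl 0))), e (.inl (.inl 1))))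
    (((Sigma1Fun.var _).natPair (.var _)).natPair (.var _))
  let F (x y : DefUltrapower U n) : Prop :=
    σ.Realize (Sum.elim ![x, y] fun _ => ofFun diagonal) finZeroElim
  have F_iff (f g : DefFun n) : F (ofFun f) (ofFun g) ↔
      HoldsUltra U σ (Sum.elim ![f, g] fun _ => diagonal) finZeroElim := by
    rw [← realize_sumElim_ofFun]
    refine iff_of_eq (congrArg (fun v => σ.Realize (Sum.elim v _) _) ?_)
    funext a
    fin_cases a <;> rfl
  have holdsAt_iff (f g : DefFun n) (i : ℕ) :
      HoldsAt i σ (Sum.elim ![f, g] fun _ => diagonal) finZeroElim ↔ H ((i, f.1 i), g.1 i) :=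
    (holdsAt_sumElim _ _).trans (σ_iff _ _)
  refine ⟨F, ⟨1, σ, fun _ => ofFun diagonal, hσ, fun v => ?_⟩, fun f g h => ?_,
    fun f g D hD hU h => ?_⟩
  · refine iff_of_eq (congrArg (fun v => σ.Realize (Sum.elim v _) _) ?_)
    funext a
    fin_cases a <;> rfl
  · exact (hσ.eventually_holdsAt ((F_iff f g).1 h)).mono fun i => (holdsAt_iff f g i).1
  · exact (F_iff f g).2 (hσ.holdsUltra_of_forall_mem hD hU fun i hi =>
      (holdsAt_iff f g i).2 (h i hi))

theorem DefUltrapower.exists_sigmaInjWhole (hU : (U : Filter ℕ) ≤ atTop) :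
    ∃ a : DefUltrapower U n, SigmaInjWhole _ (n + 1) a := by
  obtain ⟨H, hH, index_lt, index_unique, value_unique, exists_index⟩ := exists_indexing_below n
  obtain ⟨F, hF, eventually_of_F, F_of_forall⟩ := hH.exists_sigmaDef2 (U := U)
  refine ⟨ofFun ⟨id, .of_primrec .id⟩, F, hF, ?_, ?_, ?_⟩ <;>
    simp only [ofFun_surjective.forall, ofFun_surjective.exists]
  · intro f
    obtain ⟨k, hk⟩ := exists_index f.1 f.2
    have not_lt : SigmaPred (n + 1) fun i => ¬k < i :=
      .of_primrecPred (Primrec.nat_lt.comp (.const k) .id).not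
    obtain ⟨g, hg, g_index⟩ := exists_sigmaFun_choice
      (hH.comp_sigmaFun ((SigmaFun.pair (.of_primrec .fst) (f.2.comp_primrec .fst)).pair
        (.of_primrec .snd))) not_lt hk
    have F_g : F (ofFun f) (ofFun ⟨g, hg⟩) :=
      F_of_forall _ _ _ not_lt (hU (eventually_gt_atTop k)) g_index
    exact ⟨⟨g, hg⟩, ofFun_lt_ofFun.2 ((eventually_of_F _ _ F_g).mono fun i => index_lt i _ _), F_g⟩
  · intro f g g' h h'
    exact ofFun_eq_ofFun.2 (((eventually_of_F _ _ h).and (eventually_of_F _ _ h')).mono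
      fun i hi => index_unique i _ _ _ hi.1 hi.2)
  · intro f f' g h h'
    exact ofFun_eq_ofFun.2 (((eventually_of_F _ _ h).and (eventually_of_F _ _ h')).mono
      fun i hi => value_unique i _ _ _ hi.1 hi.2)

end Model

theorem statement_1_general (n : ℕ) :
    ∃ (M : Type) (_ : lang.Structure M), PAm M ∧ ISig n M ∧
      ∃ a : M, SigmaInjWhole M (n + 1) a :=
  ⟨DefUltrapower (hyperfilter ℕ) n, inferInstance, DefUltrapower.pAm, DefUltrapower.iSig,
    DefUltrapower.exists_sigmaInjWhole Nat.hyperfilter_le_atTop⟩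

end Ultrapower

/-- For every `n ≥ 1`, PA⁻ + IΣn does not prove CARD(Σ_{n+1}):
there is a model of PA⁻ + IΣn with a Σ_{n+1}-definable injection of the whole
model into `[0, a)` for some `a`. -/
theorem statement_1 (n : ℕ) (hn : 1 ≤ n) :
    ∃ (M : Type) (_ : lang.Structure M), PAm M ∧ ISig n M ∧
      ∃ a : M, SigmaInjWhole M (n + 1) a :=
  statement_1_general n

end ArithFC
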